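/- arXiv:1401.2789 — 7 statements merged into one kernel-verified Lean document; each statement's English description precedes it below -/
import Mathlib

section
/- Let k and d be integers with d > 1 and let j_1, …, j_d be integers with 0 ≤ j_i < k for each i. If f : ℂ → ℂ is entire and satisfies f^{(k)}(z) = f^{(j_1)}(z) ⋯ f^{(j_d)}(z) for all z ∈ ℂ, then f is a polynomial. -/
/-!
A transcendental entire function behaves at suitable points `z₀` like an exponential: for a large
real `K`, `f⁽ⁱ⁾(z₀) ≈ (K / z₀) ^ i * f z₀` for all small `i`, while `‖f z₀‖` exceeds any prescribed
power of `K * ‖z₀‖`. A product of at least two derivatives is then at least about `‖f z₀‖ ^ 2` up to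
powers of `K * ‖z₀‖`, which is too large for a single derivative.

Such points are found by maximizing `‖f z‖ * ((R / ‖z‖) ^ 2 - 1) ^ N` over `1 ≤ ‖z‖ ≤ R`. Near a
maximum, `‖f‖` is bounded by `(1 + O(1 / N)) ‖f z₀‖` times the modulus of an exponential, and the
Borel–Carathéodory and Cauchy estimates turn this one-sided bound into the comparison of
derivatives. Since the weight vanishes on `‖z‖ = R`, a large `K` forces `‖f z₀‖` to be at least of
order `K ^ N`.
-/

open Asymptotics Bornology Filter Metric Topology

section PolynomialGrowth

theorem iteratedDeriv_zero_eq_zero_of_isBigO_pow {E : Type*} [NormedAddCommGroup E]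
    [NormedSpace ℂ E] [CompleteSpace E] {f : ℂ → E} (hf : Differentiable ℂ f) {m n : ℕ}
    (hgrowth : f =O[cobounded ℂ] fun z ↦ z ^ m) (hmn : m < n) :
    iteratedDeriv n f 0 = 0 := by
  obtain ⟨C, hC⟩ := hgrowth.bound
  obtain ⟨r, -, hr⟩ := hasBasis_cobounded_norm.eventually_iff.1 hC
  have cauchy : ∀ᶠ R : ℝ in atTop, ‖iteratedDeriv n f 0‖ ≤ n.factorial * C * (R ^ m / R ^ n) := by
    filter_upwards [eventually_ge_atTop r, eventually_gt_atTop 0] with R hrR hR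
    have hsphere : ∀ z ∈ sphere (0 : ℂ) R, ‖f z‖ ≤ C * R ^ m := fun z hz ↦ by
      have hz' : ‖z‖ = R := mem_sphere_zero_iff_norm.1 hz
      simpa only [norm_pow, hz'] using hr (show r ≤ ‖z‖ from hz'.symm ▸ hrR)
    refine (Complex.norm_iteratedDeriv_le_of_forall_mem_sphere_norm_le n hR hf.diffContOnCl
      hsphere).trans_eq ?_
    ring
  have hlim : Tendsto (fun R : ℝ ↦ n.factorial * C * (R ^ m / R ^ n)) atTop (𝓝 0) := by
    simpa only [mul_zero] using (tendsto_pow_div_pow_atTop_zero hmn).const_mul (n.factorial * C)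
  exact norm_le_zero_iff.1 (ge_of_tendsto hlim cauchy)

theorem exists_polynomial_of_isBigO_pow {f : ℂ → ℂ} (hf : Differentiable ℂ f) {m : ℕ}
    (hgrowth : f =O[cobounded ℂ] fun z ↦ z ^ m) :
    ∃ p : Polynomial ℂ, ∀ z, f z = p.eval z := by
  refine ⟨∑ n ∈ Finset.range (m + 1),
    Polynomial.C ((n.factorial : ℂ)⁻¹ * iteratedDeriv n f 0) * Polynomial.X ^ n, fun z ↦ ?_⟩
  rw [← Complex.taylorSeries_eq_of_entire' 0 z hf, tsum_eq_sum (s := Finset.range (m + 1))]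
  · simp [Polynomial.eval_finsetSum]
  · intro n hn
    have hmn : m < n := by simpa using hn
    rw [iteratedDeriv_zero_eq_zero_of_isBigO_pow hf hgrowth hmn, mul_zero, zero_mul]

end PolynomialGrowth

section ExponentialComparison

variable {g : ℂ → ℂ} {M : ℝ}

theorem norm_sub_exp_le_of_norm_le_exp (hg : DifferentiableOn ℂ g (ball 0 1)) (hg0 : g 0 = 1)
    (hM : 0 < M) (hle : ∀ v ∈ ball (0 : ℂ) 1, ‖g v‖ ≤ (1 + M) * Real.exp v.re)
    {v : ℂ} (hv : v ∈ ball 0 1) :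
    ‖g v - Complex.exp v‖ ≤ 2 * M * ‖v‖ / (1 - ‖v‖) * Real.exp v.re := by
  let h : ℂ → ℂ := fun v ↦ g v * Complex.exp (-v) - 1
  have hh : DifferentiableOn ℂ h (ball 0 1) :=
    (hg.mul (by fun_prop)).sub (differentiableOn_const 1)
  have h_re : Set.MapsTo h (ball 0 1) {z | z.re ≤ M} := fun w hw ↦ by
    have hnorm : ‖g w * Complex.exp (-w)‖ ≤ 1 + M := by
      rw [norm_mul, Complex.norm_exp, Complex.neg_re, Real.exp_neg, ← div_eq_mul_inv,
        div_le_iff₀ (Real.exp_pos _)]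
      exact hle w hw
    have := (Complex.re_le_norm _).trans hnorm
    simp only [Set.mem_ofPred_eq, h, Complex.sub_re, Complex.one_re]
    linarith
  have hfactor : g v - Complex.exp v = h v * Complex.exp v := by
    simp only [h, Complex.exp_neg]
    field_simp [Complex.exp_ne_zero]
  rw [hfactor, norm_mul, Complex.norm_exp]
  gcongr
  exact Complex.borelCaratheodory_zero hM hh h_re one_pos hv (by simp [h, hg0])

theorem norm_iteratedDeriv_zero_sub_one_le (hg : DifferentiableOn ℂ g (ball 0 1)) (hg0 : g 0 = 1)
    (hM : 0 < M) (hle : ∀ v ∈ ball (0 : ℂ) 1, ‖g v‖ ≤ (1 + M) * Real.exp v.re) (i : ℕ) :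
    ‖iteratedDeriv i g 0 - 1‖ ≤ i.factorial * 2 ^ i * (6 * M) := by
  have hdiff : DifferentiableOn ℂ (fun v ↦ g v - Complex.exp v) (ball 0 1) :=
    hg.sub (by fun_prop)
  have hderiv : iteratedDeriv i (fun v ↦ g v - Complex.exp v) 0 = iteratedDeriv i g 0 - 1 := by
    have hg_contDiff : ContDiffAt ℂ i g 0 :=
      (hg.analyticAt (ball_mem_nhds 0 one_pos)).contDiffAt
    rw [iteratedDeriv_fun_sub hg_contDiff (by fun_prop), iteratedDeriv_eq_iterate,
      iteratedDeriv_eq_iterate, Complex.iter_deriv_exp, Complex.exp_zero]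
  have hsphere : ∀ v ∈ sphere (0 : ℂ) (1 / 2), ‖g v - Complex.exp v‖ ≤ 6 * M := fun v hv ↦ by
    have hv' : ‖v‖ = 1 / 2 := mem_sphere_zero_iff_norm.1 hv
    have hexp : Real.exp v.re ≤ 3 := by
      have hre : v.re ≤ 1 := (Complex.re_le_norm v).trans (by linarith)
      linarith [Real.exp_le_exp.2 hre, Real.exp_one_lt_d9]
    calc ‖g v - Complex.exp v‖ ≤ 2 * M * ‖v‖ / (1 - ‖v‖) * Real.exp v.re :=
          norm_sub_exp_le_of_norm_le_exp hg hg0 hM hle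
            (mem_ball_zero_iff.2 (by linarith))
      _ = 2 * M * Real.exp v.re := by rw [hv']; ring
      _ ≤ 2 * M * 3 := by gcongr
      _ = 6 * M := by ring
  have hcl : DiffContOnCl ℂ (fun v ↦ g v - Complex.exp v) (ball 0 (1 / 2)) :=
    hdiff.diffContOnCl_ball (closedBall_subset_ball (by norm_num))
  rw [← hderiv]
  refine (Complex.norm_iteratedDeriv_le_of_forall_mem_sphere_norm_le i (by norm_num) hcl
    hsphere).trans_eq ?_
  rw [one_div, inv_pow, div_inv_eq_mul]
  ring

theorem norm_pow_mul_iteratedDeriv_sub_le {f : ℂ → ℂ} (hf : Differentiable ℂ f) {z₀ a : ℂ}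
    (hz₀ : f z₀ ≠ 0) (hM : 0 < M)
    (hle : ∀ v : ℂ, ‖v‖ < 1 → ‖f (z₀ + a * v)‖ ≤ ‖f z₀‖ * ((1 + M) * Real.exp v.re)) (i : ℕ) :
    ‖a ^ i * iteratedDeriv i f z₀ - f z₀‖ ≤ i.factorial * 2 ^ i * (6 * M) * ‖f z₀‖ := by
  have hcomp : Differentiable ℂ fun v ↦ f (z₀ + a * v) := hf.comp (by fun_prop)
  have hderiv : iteratedDeriv i (fun v ↦ f (z₀ + a * v) / f z₀) 0 =
      a ^ i * iteratedDeriv i f z₀ / f z₀ := by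
    have hshift : ContDiff ℂ i fun w ↦ f (z₀ + w) := hf.contDiff.comp (by fun_prop)
    simp only [iteratedDeriv_div_const, iteratedDeriv_comp_const_mul hshift, mul_zero,
      iteratedDeriv_comp_const_add, add_zero]
  have hnorm : ∀ v ∈ ball (0 : ℂ) 1, ‖f (z₀ + a * v) / f z₀‖ ≤ (1 + M) * Real.exp v.re :=
    fun v hv ↦ by
      rw [norm_div, div_le_iff₀' (norm_pos_iff.2 hz₀)]
      exact hle v (mem_ball_zero_iff.1 hv)
  have hmain := norm_iteratedDeriv_zero_sub_one_le (hcomp.div_const _).differentiableOn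
    (by simp [hz₀]) hM hnorm i
  rwa [hderiv, div_sub_one hz₀, norm_div, div_le_iff₀ (norm_pos_iff.2 hz₀)] at hmain

end ExponentialComparison

section Barrier

/-- The weight `(R / ‖z‖) ^ 2 - 1`, positive inside the circle `‖z‖ = R` and zero on it. Multiplying
`‖f‖` by a power of it keeps maximum points away from that circle. -/
noncomputable def barrier (R : ℝ) (z : ℂ) : ℝ := (R / ‖z‖) ^ 2 - 1

variable {R : ℝ} {z u : ℂ}

theorem one_add_inv_barrier_mul_norm_sq (hz : z ≠ 0) (hb : barrier R z ≠ 0) :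
    (1 + (barrier R z)⁻¹) * ‖z‖ ^ 2 = R ^ 2 / barrier R z := by
  have hz' : ‖z‖ ≠ 0 := norm_ne_zero_iff.2 hz
  have hR : (1 + barrier R z) * ‖z‖ ^ 2 = R ^ 2 := by
    rw [barrier]
    field_simp
    ring
  rw [← hR]
  field_simp
  ring

theorem norm_le_of_barrier_nonneg (hR : 0 ≤ R) (hz : z ≠ 0) (hb : 0 ≤ barrier R z) : ‖z‖ ≤ R := by
  have hdiv : 1 ≤ R / ‖z‖ := (one_le_sq_iff₀ (by positivity)).1 (sub_nonneg.1 hb)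
  exact (one_le_div (norm_pos_iff.2 hz)).1 hdiv

theorem norm_one_add_sq (u : ℂ) : ‖1 + u‖ ^ 2 = 1 + (2 * u.re + ‖u‖ ^ 2) := by
  rw [Complex.sq_norm, Complex.sq_norm, Complex.normSq_apply, Complex.normSq_apply]
  simp only [Complex.add_re, Complex.one_re, Complex.add_im, Complex.one_im]
  ring

theorem norm_one_add_sq_mul_barrier (hz : z ≠ 0) (hu : 1 + u ≠ 0) :
    ‖1 + u‖ ^ 2 * barrier R (z * (1 + u)) = barrier R z - (2 * u.re + ‖u‖ ^ 2) := by
  have hz' : ‖z‖ ≠ 0 := norm_ne_zero_iff.2 hz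
  have hu' : ‖1 + u‖ ≠ 0 := norm_ne_zero_iff.2 hu
  calc ‖1 + u‖ ^ 2 * barrier R (z * (1 + u)) = (R / ‖z‖) ^ 2 - ‖1 + u‖ ^ 2 := by
        rw [barrier, norm_mul]
        field_simp
    _ = barrier R z - (2 * u.re + ‖u‖ ^ 2) := by
        rw [norm_one_add_sq, barrier]
        ring

theorem barrier_mul_one_add_pos_and_div_eq (hz : z ≠ 0) (hu : 1 + u ≠ 0) (hb : 0 < barrier R z)
    (hden : 0 < 1 - (barrier R z)⁻¹ * (2 * u.re + ‖u‖ ^ 2)) :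
    0 < barrier R (z * (1 + u)) ∧ barrier R z / barrier R (z * (1 + u)) =
      (1 + (2 * u.re + ‖u‖ ^ 2)) / (1 - (barrier R z)⁻¹ * (2 * u.re + ‖u‖ ^ 2)) := by
  have hmul : ‖1 + u‖ ^ 2 * barrier R (z * (1 + u)) =
      barrier R z * (1 - (barrier R z)⁻¹ * (2 * u.re + ‖u‖ ^ 2)) := by
    rw [norm_one_add_sq_mul_barrier hz hu, mul_sub, mul_one, mul_inv_cancel_left₀ hb.ne']
  have hb' : 0 < barrier R (z * (1 + u)) :=
    pos_of_mul_pos_right (hmul ▸ mul_pos hb hden) (sq_nonneg _)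
  refine ⟨hb', ?_⟩
  rw [← norm_one_add_sq, div_eq_div_iff hb'.ne' hden.ne', hmul]

theorem continuousOn_barrier (R : ℝ) : ContinuousOn (barrier R) {z | 1 ≤ ‖z‖} := by
  have hne : ∀ z ∈ {z : ℂ | 1 ≤ ‖z‖}, ‖z‖ ≠ 0 := fun z hz ↦ (one_pos.trans_le hz).ne'
  unfold barrier
  fun_prop (disch := assumption)

end Barrier

section ExponentEstimates

variable {N : ℕ} {q s : ℝ} {u : ℂ}

theorem one_add_div_one_sub_mul_le_exp (hq : 0 ≤ q) (hqs : q * s ≤ 1 / 2) :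
    (1 + s) / (1 - q * s) ≤ Real.exp ((1 + q) * s + 2 * ((1 + q) * s) ^ 2) := by
  have hpos : 0 < 1 - q * s := by linarith
  have hquad : (1 + q) * q * s ^ 2 / (1 - q * s) ≤ 2 * ((1 + q) * s) ^ 2 := by
    rw [div_le_iff₀ hpos]
    calc (1 + q) * q * s ^ 2 ≤ ((1 + q) * s) ^ 2 * 1 := by nlinarith [sq_nonneg s]
      _ ≤ ((1 + q) * s) ^ 2 * (2 * (1 - q * s)) := by gcongr; linarith
      _ = 2 * ((1 + q) * s) ^ 2 * (1 - q * s) := by ring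
  calc (1 + s) / (1 - q * s)
      = (1 + q) * s + (1 + q) * q * s ^ 2 / (1 - q * s) + 1 := by
        rw [div_eq_iff hpos.ne', add_mul, add_mul, div_mul_cancel₀ _ hpos.ne']
        ring
    _ ≤ (1 + q) * s + 2 * ((1 + q) * s) ^ 2 + 1 := by gcongr
    _ ≤ _ := Real.add_one_le_exp _

theorem mul_le_half_of_mul_abs_le (hN : 3 ≤ N) (hq : 0 ≤ q)
    (hs : 2 * N * (1 + q) * |s| ≤ 3) : q * s ≤ 1 / 2 := by
  have hN' : (3 : ℝ) ≤ N := by exact_mod_cast hN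
  have h6 : 6 * (q * |s|) ≤ 3 :=
    calc 6 * (q * |s|) ≤ 2 * N * ((1 + q) * |s|) := by gcongr <;> linarith
      _ ≤ 3 := by linarith
  linarith [mul_le_mul_of_nonneg_left (le_abs_self s) hq]

theorem one_add_div_one_sub_mul_pow_le_exp (hN : 3 ≤ N) (hq : 0 ≤ q)
    (hs : 2 * N * (1 + q) * |s| ≤ 3) :
    ((1 + s) / (1 - q * s)) ^ N ≤ Real.exp (N * ((1 + q) * s) + 9 / (2 * N)) := by
  have hqs := mul_le_half_of_mul_abs_le hN hq hs
  have hN' : (3 : ℝ) ≤ N := by exact_mod_cast hN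
  have hs1 : |s| ≤ 1 := by nlinarith [abs_nonneg s, mul_nonneg hq (abs_nonneg s)]
  have hbase : 0 ≤ (1 + s) / (1 - q * s) :=
    div_nonneg (by linarith [neg_le_of_abs_le hs1]) (by linarith)
  have hquad : N * (2 * ((1 + q) * s) ^ 2) ≤ 9 / (2 * N) := by
    rw [le_div_iff₀ (by positivity)]
    calc N * (2 * ((1 + q) * s) ^ 2) * (2 * N) = (2 * N * (1 + q)) ^ 2 * s ^ 2 := by ring
      _ = (2 * N * (1 + q) * |s|) ^ 2 := by rw [mul_pow _ |s|, sq_abs]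
      _ ≤ 3 ^ 2 := by gcongr
      _ = 9 := by norm_num
  calc ((1 + s) / (1 - q * s)) ^ N
      ≤ Real.exp ((1 + q) * s + 2 * ((1 + q) * s) ^ 2) ^ N :=
        pow_le_pow_left₀ hbase (one_add_div_one_sub_mul_le_exp hq hqs) N
    _ = Real.exp (N * ((1 + q) * s) + N * (2 * ((1 + q) * s) ^ 2)) := by
        rw [← Real.exp_nat_mul, mul_add]
    _ ≤ _ := by gcongr

theorem mul_abs_two_mul_re_add_norm_sq_le {K : ℝ} (hK : 1 ≤ K) (hu : ‖u‖ * K < 1) :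
    K * |2 * u.re + ‖u‖ ^ 2| ≤ 3 := by
  have hu1 : ‖u‖ ≤ 1 := by nlinarith [norm_nonneg u]
  calc K * |2 * u.re + ‖u‖ ^ 2| ≤ K * (2 * |u.re| + ‖u‖ ^ 2) := by
        gcongr
        refine (abs_add_le _ _).trans_eq ?_
        rw [abs_mul, abs_two, abs_of_nonneg (sq_nonneg ‖u‖)]
    _ ≤ K * (2 * ‖u‖ + 1 * ‖u‖) := by
        rw [sq ‖u‖]
        gcongr
        exact Complex.abs_re_le_norm u
    _ ≤ 3 := by linarith

theorem mul_two_mul_re_add_norm_sq_le {K c : ℝ} (hc : 0 < c) (hcK : c ≤ K) (hu : ‖u‖ * K < 1) :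
    K / 2 * (2 * u.re + ‖u‖ ^ 2) ≤ K * u.re + 1 / (2 * c) := by
  have hcu : ‖u‖ * c ≤ 1 := (mul_le_mul_of_nonneg_left hcK (norm_nonneg u)).trans hu.le
  have hquad : K * ‖u‖ ^ 2 / 2 ≤ 1 / (2 * c) := by
    rw [le_div_iff₀ (by positivity)]
    calc K * ‖u‖ ^ 2 / 2 * (2 * c) = (‖u‖ * K) * (‖u‖ * c) := by ring
      _ ≤ 1 * 1 := by gcongr
      _ = 1 := one_mul 1
  linarith

end ExponentEstimates

section Touching

variable {E : Type*} [NormedAddCommGroup E] {f : ℂ → E} {N : ℕ}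

theorem exists_isMaxOn_norm_mul_barrier_pow (hf : Continuous f) {R : ℝ} (hR : 1 ≤ R) (N : ℕ) :
    ∃ z₀ ∈ closedBall (0 : ℂ) R \ ball 0 1,
      IsMaxOn (fun z ↦ ‖f z‖ * barrier R z ^ N) (closedBall 0 R \ ball 0 1) z₀ := by
  have hcont : ContinuousOn (fun z ↦ ‖f z‖ * barrier R z ^ N) (closedBall 0 R \ ball 0 1) :=
    hf.norm.continuousOn.mul (((continuousOn_barrier R).mono fun z hz ↦ by simpa using hz.2).pow N)
  exact ((isCompact_closedBall 0 R).diff isOpen_ball).exists_isMaxOn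
    ⟨1, by simpa using hR⟩ hcont

theorem exists_isMaxOn_norm_mul_barrier_pow_of_not_isBigO (hf : Continuous f) (hN : N ≠ 0)
    (hgrowth : ¬ f =O[cobounded ℂ] fun z ↦ z ^ (2 * N)) {C : ℝ} (hC : 0 ≤ C) :
    ∃ R : ℝ, ∃ z₀ : ℂ, 0 ≤ R ∧ 1 ≤ ‖z₀‖ ∧ 0 < barrier R z₀ ∧
      C * (2 * N * (1 + (barrier R z₀)⁻¹) * ‖z₀‖ ^ 2) ^ N < ‖f z₀‖ ∧
      IsMaxOn (fun z ↦ ‖f z‖ * barrier R z ^ N) (closedBall 0 R \ ball 0 1) z₀ := by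
  obtain ⟨z₁, hlarge, hz₁⟩ : ∃ z₁ : ℂ, C * (8 * N) ^ N * ‖z₁ ^ (2 * N)‖ < ‖f z₁‖ ∧ 1 ≤ ‖z₁‖ := by
    have hfreq : ∃ᶠ z in cobounded ℂ, C * (8 * N) ^ N * ‖z ^ (2 * N)‖ < ‖f z‖ := by
      simpa only [not_le] using not_eventually.1 (mt (IsBigO.of_bound _) hgrowth)
    exact (hfreq.and_eventually (eventually_cobounded_le_norm 1)).exists
  obtain ⟨z₀, ⟨hz₀R, hz₀⟩, hmax⟩ :=
    exists_isMaxOn_norm_mul_barrier_pow hf (by linarith : 1 ≤ 2 * ‖z₁‖) N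
  rw [mem_closedBall_zero_iff] at hz₀R
  rw [mem_ball_zero_iff, not_lt] at hz₀
  have hbarrier₁ : barrier (2 * ‖z₁‖) z₁ = 3 := by
    rw [barrier, mul_div_cancel_right₀ _ (by positivity)]
    norm_num
  have hcompare : C * (2 * N * (2 * ‖z₁‖) ^ 2) ^ N < ‖f z₀‖ * barrier (2 * ‖z₁‖) z₀ ^ N :=
    calc C * (2 * N * (2 * ‖z₁‖) ^ 2) ^ N = C * (8 * N) ^ N * ‖z₁ ^ (2 * N)‖ := by
          rw [norm_pow, pow_mul, mul_assoc C, ← mul_pow]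
          ring
      _ < ‖f z₁‖ := hlarge
      _ ≤ ‖f z₁‖ * barrier (2 * ‖z₁‖) z₁ ^ N := by
          rw [hbarrier₁]
          exact le_mul_of_one_le_right (norm_nonneg _) (one_le_pow₀ (by norm_num))
      _ ≤ ‖f z₀‖ * barrier (2 * ‖z₁‖) z₀ ^ N :=
          hmax ⟨mem_closedBall_zero_iff.2 (by linarith), by simpa using hz₁⟩
  have hbarrier₀ : 0 < barrier (2 * ‖z₁‖) z₀ := by
    have hnonneg : 0 ≤ barrier (2 * ‖z₁‖) z₀ :=
      sub_nonneg.2 (one_le_pow₀ ((one_le_div (by linarith)).2 hz₀R))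
    refine hnonneg.lt_of_ne' fun hzero ↦ ?_
    rw [hzero, zero_pow hN, mul_zero] at hcompare
    exact hcompare.not_ge (by positivity)
  refine ⟨2 * ‖z₁‖, z₀, by positivity, hz₀, hbarrier₀, ?_, hmax⟩
  rw [mul_assoc _ _ (‖z₀‖ ^ 2), one_add_inv_barrier_mul_norm_sq (norm_pos_iff.1 (by linarith))
    hbarrier₀.ne', ← mul_div_assoc, div_pow, ← mul_div_assoc, div_lt_iff₀ (by positivity)]
  exact hcompare

theorem norm_le_exp_of_isMaxOn (hN : 3 ≤ N) {R K : ℝ} (hR : 0 ≤ R) {z₀ u : ℂ} (hz₀ : 2 ≤ ‖z₀‖)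
    (hb : 0 < barrier R z₀) (hK : K = 2 * N * (1 + (barrier R z₀)⁻¹)) (hu : ‖u‖ * K < 1)
    (hmax : IsMaxOn (fun z ↦ ‖f z‖ * barrier R z ^ N) (closedBall 0 R \ ball 0 1) z₀) :
    ‖f (z₀ * (1 + u))‖ ≤ ‖f z₀‖ * Real.exp (K * u.re + 5 / N) := by
  have hN' : (3 : ℝ) ≤ N := by exact_mod_cast hN
  have hq : 0 < (barrier R z₀)⁻¹ := inv_pos.2 hb
  have hKN : 2 * N ≤ K := by nlinarith
  have hhalf : 1 / 2 ≤ ‖1 + u‖ := by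
    have htri : ‖(1 : ℂ)‖ - ‖u‖ ≤ ‖1 + u‖ := norm_sub_le_norm_add 1 u
    rw [norm_one] at htri
    nlinarith [norm_nonneg u]
  have hz : 1 ≤ ‖z₀ * (1 + u)‖ := by
    rw [norm_mul]
    nlinarith
  have hs : 2 * N * (1 + (barrier R z₀)⁻¹) * |2 * u.re + ‖u‖ ^ 2| ≤ 3 :=
    hK ▸ mul_abs_two_mul_re_add_norm_sq_le (by linarith) hu
  obtain ⟨hb', hratio⟩ := barrier_mul_one_add_pos_and_div_eq (norm_pos_iff.1 (by linarith))
    (norm_pos_iff.1 (by linarith)) hb (by linarith [mul_le_half_of_mul_abs_le hN hq.le hs])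
  calc ‖f (z₀ * (1 + u))‖
      ≤ ‖f z₀‖ * (barrier R z₀ / barrier R (z₀ * (1 + u))) ^ N := by
        rw [div_pow, ← mul_div_assoc, le_div_iff₀ (by positivity)]
        have hzR := norm_le_of_barrier_nonneg hR (norm_pos_iff.1 (by linarith)) hb'.le
        exact hmax ⟨mem_closedBall_zero_iff.2 hzR, by simpa using hz⟩
    _ ≤ ‖f z₀‖ * Real.exp (K / 2 * (2 * u.re + ‖u‖ ^ 2) + 9 / (2 * N)) := by
        have hKhalf : K / 2 * (2 * u.re + ‖u‖ ^ 2) =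
            N * ((1 + (barrier R z₀)⁻¹) * (2 * u.re + ‖u‖ ^ 2)) := by rw [hK]; ring
        rw [hratio, hKhalf]
        gcongr
        exact one_add_div_one_sub_mul_pow_le_exp hN hq.le hs
    _ ≤ ‖f z₀‖ * Real.exp (K * u.re + 1 / (2 * (2 * N)) + 9 / (2 * N)) := by
        gcongr
        exact mul_two_mul_re_add_norm_sq_le (by positivity) hKN hu
    _ = ‖f z₀‖ * Real.exp (K * u.re + 19 / 4 / N) := by
        congr 2
        field_simp
        ring
    _ ≤ ‖f z₀‖ * Real.exp (K * u.re + 5 / N) := by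
        gcongr
        norm_num

theorem exists_norm_le_exp (hf : Continuous f) (hN : 3 ≤ N)
    (hgrowth : ¬ f =O[cobounded ℂ] fun z ↦ z ^ (2 * N)) (C : ℝ) :
    ∃ z₀ : ℂ, ∃ K : ℝ, 1 ≤ ‖z₀‖ ∧ 1 ≤ K ∧ C * (K * ‖z₀‖ ^ 2) ^ N < ‖f z₀‖ ∧
      ∀ v : ℂ, ‖v‖ < 1 → ‖f (z₀ + z₀ / K * v)‖ ≤ ‖f z₀‖ * Real.exp (v.re + 5 / N) := by
  obtain ⟨B, hB⟩ := (isCompact_closedBall (0 : ℂ) 2).exists_bound_of_continuousOn hf.continuousOn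
  have hB0 : 0 ≤ B := (norm_nonneg _).trans (hB 0 (mem_closedBall_self zero_le_two))
  obtain ⟨R, z₀, hR, hz₀, hb, hlarge, hmax⟩ := exists_isMaxOn_norm_mul_barrier_pow_of_not_isBigO
    hf (by lia) hgrowth (hB0.trans (le_max_right C B))
  obtain ⟨K, hK⟩ : ∃ K, K = 2 * N * (1 + (barrier R z₀)⁻¹) := ⟨_, rfl⟩
  have hK1 : 1 ≤ K := by
    have hN' : (3 : ℝ) ≤ N := by exact_mod_cast hN
    have hq : 0 < (barrier R z₀)⁻¹ := inv_pos.2 hb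
    nlinarith
  have hpow : 1 ≤ (K * ‖z₀‖ ^ 2) ^ N := one_le_pow₀ (one_le_mul_of_one_le_of_one_le hK1
    (one_le_pow₀ hz₀))
  rw [← hK] at hlarge
  have hz₀2 : 2 ≤ ‖z₀‖ := by
    by_contra! hlt
    refine hlarge.not_ge ((hB z₀ (mem_closedBall_zero_iff.2 hlt.le)).trans ?_)
    exact (le_max_right C B).trans
      (le_mul_of_one_le_right (hB0.trans (le_max_right C B)) hpow)
  refine ⟨z₀, K, hz₀, hK1, lt_of_le_of_lt (by gcongr; exact le_max_left C B) hlarge,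
    fun v hv ↦ ?_⟩
  have hu : ‖v / K‖ * K < 1 := by
    rwa [norm_div, Complex.norm_of_nonneg (by linarith), div_mul_cancel₀ _ (by linarith)]
  have hlocal := norm_le_exp_of_isMaxOn hN hR hz₀2 hb hK hu hmax
  rwa [Complex.div_ofReal_re, mul_div_cancel₀ _ (by linarith), mul_add, mul_one,
    mul_div_left_comm, mul_comm v] at hlocal

end Touching

theorem exists_iteratedDeriv_near_exp {f : ℂ → ℂ} (hf : Differentiable ℂ f)
    (hgrowth : ∀ m : ℕ, ¬ f =O[cobounded ℂ] fun z ↦ z ^ m) (m : ℕ) (C : ℝ) {ε : ℝ} (hε : 0 < ε) :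
    ∃ z₀ : ℂ, ∃ K : ℝ, 1 ≤ ‖z₀‖ ∧ 1 ≤ K ∧ C * (K * ‖z₀‖) ^ m < ‖f z₀‖ ∧
      ∀ i ≤ m, ‖(z₀ / K) ^ i * iteratedDeriv i f z₀ - f z₀‖ ≤ ε * ‖f z₀‖ := by
  have herror : Tendsto (fun N : ℕ ↦ m.factorial * 2 ^ m * (6 * (Real.exp (5 / N) - 1))) atTop
      (𝓝 0) := by
    have := (Real.continuous_exp.tendsto 0).comp (tendsto_const_div_atTop_nhds_zero_nat 5)
    simpa using ((this.sub_const 1).const_mul 6).const_mul (m.factorial * 2 ^ m : ℝ)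
  obtain ⟨N, ⟨hNε, hN3⟩, hmN⟩ := (((herror.eventually_le_const hε).and
    (eventually_ge_atTop 3)).and (eventually_ge_atTop m)).exists
  obtain ⟨z₀, K, hz₀, hK, hlarge, hlocal⟩ :=
    exists_norm_le_exp hf.continuous hN3 (hgrowth (2 * N)) |C|
  have hM : 0 < Real.exp (5 / N) - 1 := by
    rw [sub_pos, Real.one_lt_exp_iff]
    positivity
  refine ⟨z₀, K, hz₀, hK, lt_of_le_of_lt ?_ hlarge, fun i hi ↦ ?_⟩
  · calc C * (K * ‖z₀‖) ^ m ≤ |C| * (K * ‖z₀‖) ^ N := by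
          gcongr
          · exact le_abs_self C
          · exact one_le_mul_of_one_le_of_one_le hK hz₀
      _ ≤ |C| * (K * ‖z₀‖ ^ 2) ^ N := by
          gcongr
          exact le_self_pow₀ hz₀ two_ne_zero
  · have hfz₀ : f z₀ ≠ 0 := norm_pos_iff.1 (lt_of_le_of_lt (by positivity) hlarge)
    calc _ ≤ i.factorial * 2 ^ i * (6 * (Real.exp (5 / N) - 1)) * ‖f z₀‖ :=
          norm_pow_mul_iteratedDeriv_sub_le hf hfz₀ hM
            (fun v hv ↦ by
              rw [add_sub_cancel, ← Real.exp_add, add_comm (5 / (N : ℝ))]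
              exact hlocal v hv) i
      _ ≤ m.factorial * 2 ^ m * (6 * (Real.exp (5 / N) - 1)) * ‖f z₀‖ := by
          gcongr
          norm_num
      _ ≤ ε * ‖f z₀‖ := by gcongr

theorem exists_norm_iteratedDeriv_bounds {f : ℂ → ℂ} (hf : Differentiable ℂ f)
    (hgrowth : ∀ m : ℕ, ¬ f =O[cobounded ℂ] fun z ↦ z ^ m) (m : ℕ) (C : ℝ) :
    ∃ z₀ : ℂ, ∃ K : ℝ, 1 ≤ ‖z₀‖ ∧ 1 ≤ K ∧ C * (K * ‖z₀‖) ^ m < ‖f z₀‖ ∧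
      ∀ i ≤ m, ‖f z₀‖ / 2 ≤ (‖z₀‖ / K) ^ i * ‖iteratedDeriv i f z₀‖ ∧
        (‖z₀‖ / K) ^ i * ‖iteratedDeriv i f z₀‖ ≤ 2 * ‖f z₀‖ := by
  obtain ⟨z₀, K, hz₀, hK, hlarge, hnear⟩ :=
    exists_iteratedDeriv_near_exp hf hgrowth m C one_half_pos
  refine ⟨z₀, K, hz₀, hK, hlarge, fun i hi ↦ ?_⟩
  have hnorm : ‖(z₀ / K) ^ i * iteratedDeriv i f z₀‖ =
      (‖z₀‖ / K) ^ i * ‖iteratedDeriv i f z₀‖ := by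
    rw [norm_mul, norm_pow, norm_div, Complex.norm_of_nonneg (by linarith)]
  rw [← hnorm]
  have hdiff := abs_le.1 ((abs_norm_sub_norm_le _ _).trans (hnear i hi))
  constructor <;> linarith [hdiff.1, hdiff.2, norm_nonneg (f z₀)]

theorem sq_le_prod_of_one_le {ι : Type*} [Fintype ι] [Nontrivial ι] {a : ℝ} (ha : 1 ≤ a)
    {x : ι → ℝ} (hx : ∀ i, a ≤ x i) : a ^ 2 ≤ ∏ i, x i :=
  calc a ^ 2 ≤ a ^ Fintype.card ι := pow_le_pow_right₀ ha Fintype.one_lt_card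
    _ = ∏ _i : ι, a := by rw [Finset.prod_const, Finset.card_univ]
    _ ≤ ∏ i, x i := Finset.prod_le_prod (fun _ _ ↦ by linarith) fun i _ ↦ hx i

theorem entire_solution_is_polynomial_general {ι : Type*} [Fintype ι] [Nontrivial ι]
    (k m : ℕ) (j : ι → ℕ) (C : ℝ) (f : ℂ → ℂ) (hf : Differentiable ℂ f)
    (hle : ∀ z : ℂ, 1 ≤ ‖z‖ →
      ∏ i, ‖iteratedDeriv (j i) f z‖ ≤ C * ‖z‖ ^ m * ‖iteratedDeriv k f z‖) :
    ∃ p : Polynomial ℂ, ∀ z : ℂ, f z = p.eval z := by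
  by_contra hnp
  obtain ⟨z₀, K, hz₀, hK, hlarge, hbounds⟩ := exists_norm_iteratedDeriv_bounds hf
    (fun n hn ↦ hnp (exists_polynomial_of_isBigO_pow hf hn)) (∑ i, j i + m + k) (8 * |C| + 2)
  have hX : 1 ≤ (K * ‖z₀‖) ^ (∑ i, j i + m + k) :=
    one_le_pow₀ (one_le_mul_of_one_le_of_one_le hK hz₀)
  have hF : 2 ≤ ‖f z₀‖ := by nlinarith [abs_nonneg C]
  have hlower (i : ι) : ‖f z₀‖ / 2 ≤ (‖z₀‖ / K) ^ j i * ‖iteratedDeriv (j i) f z₀‖ := by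
    have hji : j i ≤ ∑ i, j i := Finset.single_le_sum (fun _ _ ↦ Nat.zero_le _) (Finset.mem_univ i)
    exact (hbounds (j i) (by lia)).1
  have hupper : ‖iteratedDeriv k f z₀‖ ≤ (K * ‖z₀‖) ^ k * (2 * ‖f z₀‖) :=
    calc ‖iteratedDeriv k f z₀‖ = (K / ‖z₀‖) ^ k * ((‖z₀‖ / K) ^ k * ‖iteratedDeriv k f z₀‖) := by
          rw [← mul_assoc, ← mul_pow, div_mul_div_cancel₀ (by positivity),
            div_self (by positivity), one_pow, one_mul]
      _ ≤ (K * ‖z₀‖) ^ k * (2 * ‖f z₀‖) := by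
          gcongr ?_ ^ k * ?_
          · exact (div_le_self (by positivity) hz₀).trans
              (le_mul_of_one_le_right (by positivity) hz₀)
          · exact (hbounds k (by lia)).2
  have hprod : (‖f z₀‖ / 2) ^ 2 ≤ |C| * (K * ‖z₀‖) ^ (∑ i, j i + m + k) * (2 * ‖f z₀‖) :=
    calc (‖f z₀‖ / 2) ^ 2 ≤ ∏ i, (‖z₀‖ / K) ^ j i * ‖iteratedDeriv (j i) f z₀‖ :=
          sq_le_prod_of_one_le (by linarith) hlower
      _ = (‖z₀‖ / K) ^ (∑ i, j i) * ∏ i, ‖iteratedDeriv (j i) f z₀‖ := by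
          rw [Finset.prod_mul_distrib, Finset.prod_pow_eq_pow_sum]
      _ ≤ (K * ‖z₀‖) ^ (∑ i, j i) *
            (|C| * (K * ‖z₀‖) ^ m * ((K * ‖z₀‖) ^ k * (2 * ‖f z₀‖))) := by
          have hr : ‖z₀‖ ≤ K * ‖z₀‖ := le_mul_of_one_le_left (norm_nonneg _) hK
          gcongr
          · exact (div_le_self (norm_nonneg _) hK).trans hr
          · refine (hle z₀ hz₀).trans ?_
            gcongr
            exact le_abs_self C
      _ = |C| * (K * ‖z₀‖) ^ (∑ i, j i + m + k) * (2 * ‖f z₀‖) := by ring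
  nlinarith [abs_nonneg C]

/-- Let `k` and `d` be integers with `d > 1` and let `j_1, …, j_d` be
integers with `0 ≤ j_i < k`. If `f : ℂ → ℂ` is entire and satisfies
`f^{(k)}(z) = f^{(j_1)}(z) ⋯ f^{(j_d)}(z)` for all `z ∈ ℂ`, then `f` is a polynomial. -/
theorem entire_solution_is_polynomial
    (k d : ℕ) (hd : 1 < d) (j : Fin d → ℕ) (hj : ∀ i, j i < k)
    (f : ℂ → ℂ) (hf : Differentiable ℂ f)
    (heq : ∀ z : ℂ, iteratedDeriv k f z = ∏ i : Fin d, iteratedDeriv (j i) f z) :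
    ∃ p : Polynomial ℂ, ∀ z : ℂ, f z = p.eval z := by
  have : Nontrivial (Fin d) := Fin.nontrivial_iff_two_le.2 hd
  exact entire_solution_is_polynomial_general k 0 j 1 f hf fun z _ ↦ by simp [heq, norm_prod]
end

section
/- Let k, d, m be positive integers with d > 1, let j_1, …, j_d be integers with 0 ≤ j_i < k, and suppose k + m = Σ_{i=1}^{d} (j_i + m). Let c : ℕ → ℂ satisfy c(0) ≠ 0, c(0)^{d−1} = (−m)_k / ((−m)_{j_1} ⋯ (−m)_{j_d}), and, for every integer n ≥ 1, the recursion (n−m)_k · c(n) = Σ (n_1−m)_{j_1} ⋯ (n_d−m)_{j_d} · c(n_1) ⋯ c(n_d), the sum over all d-tuples of nonnegative integers (n_1, …, n_d) with n_1 + ⋯ + n_d = n. If the associated polynomial p has no positive integer root, then c(n) = 0 for every n ≥ 1. If p has at least one positive integer root and q denotes the greatest common divisor of the positive integer roots of p, then c(n) = 0 for every n ≥ 1 that is not divisible by q. -/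
noncomputable section

/-- The falling factorial `(x)_j = x (x-1) ⋯ (x-j+1)`, with `(x)_0 = 1`. -/
def fall (x : ℤ) (j : ℕ) : ℤ := ∏ i ∈ Finset.range j, (x - (i : ℤ))

/-- The polynomial `p(x) = (x-m)_k - ∑_{i=1}^d (-1)^{k-jᵢ} (k+m-1)_{k-jᵢ} (x-m)_{jᵢ}`
associated to the differential equation `f⁽ᵏ⁾ = f⁽ʲ¹⁾ ⋯ f⁽ʲᵈ⁾` and the multiplicity `m`. -/
def assocPoly (k m d : ℕ) (j : Fin d → ℕ) (x : ℤ) : ℤ :=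
  fall (x - (m : ℤ)) k -
    ∑ i : Fin d, (-1 : ℤ) ^ (k - j i) * fall ((k : ℤ) + (m : ℤ) - 1) (k - j i)
      * fall (x - (m : ℤ)) (j i)

/-- `q` is the greatest common divisor of the positive integer roots of `p`. -/
def IsGcdOfPosRoots (p : ℤ → ℤ) (q : ℕ) : Prop :=
  (∀ r : ℕ, 0 < r → p (r : ℤ) = 0 → q ∣ r) ∧
    ∀ t : ℕ, (∀ r : ℕ, 0 < r → p (r : ℤ) = 0 → t ∣ r) → t ∣ q

/-!
Split the tuples of sum `n` in the recursion into those concentrated in one coordinate and the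
others. The concentrated ones contribute a multiple of `c n`, and by the condition on `c 0`
moving them to the left-hand side turns the recursion into `p(n) c(n) = (other tuples)`.
If an additive submonoid `S` of `ℕ` contains the positive roots of `p` and `n ∉ S`, then
`p(n) ≠ 0`, while each other tuple has an entry outside `S`, which is smaller than `n`. Hence
`c` vanishes outside `S` by strong induction. The choices `S = 0` and `S = qℕ` give the theorem.
-/

theorem fall_eq_eval_descPochhammer (x : ℤ) (n : ℕ) : fall x n = (descPochhammer ℤ n).eval x :=
  (descPochhammer_eval_eq_prod_range n x).symm

theorem fall_add (x : ℤ) (a b : ℕ) : fall x (a + b) = fall x a * fall (x - a) b := by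
  simp only [fall, Finset.prod_range_add, Nat.cast_add, sub_sub]

theorem fall_neg (x : ℤ) (n : ℕ) : fall (-x) n = (-1) ^ n * fall (x + n - 1) n := by
  rw [fall_eq_eval_descPochhammer, fall_eq_eval_descPochhammer,
    descPochhammer_eval_eq_ascPochhammer, ← ascPochhammer_eval_neg_eq_descPochhammer]
  congr 1
  ring

theorem fall_neg_eq_mul_of_le (x : ℤ) {j k : ℕ} (hjk : j ≤ k) :
    fall (-x) k = fall (-x) j * ((-1) ^ (k - j) * fall (k + x - 1) (k - j)) := by
  obtain ⟨b, rfl⟩ := Nat.exists_eq_add_of_le hjk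
  rw [fall_add, ← neg_add', fall_neg (x + j), Nat.add_sub_cancel_left]
  push_cast
  ring_nf

theorem fall_ne_zero_of_neg {x : ℤ} (hx : x < 0) (n : ℕ) : fall x n ≠ 0 :=
  Finset.prod_ne_zero_iff.mpr fun i _ => by omega

section Tuples

variable {ι : Type*} [Fintype ι] [DecidableEq ι]

theorem prod_apply_single {M N : Type*} [Zero N] [CommMonoid M] (f : ι → N → M) (i : ι) (n : N) :
    ∏ l, f l ((Pi.single i n : ι → N) l) = f i n * ∏ l ∈ Finset.univ.erase i, f l 0 := by
  rw [← Finset.mul_prod_erase _ _ (Finset.mem_univ i), Pi.single_eq_same]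
  congr 1
  refine Finset.prod_congr rfl fun l hl => ?_
  rw [Pi.single_eq_of_ne (Finset.ne_of_mem_erase hl)]

variable {N : Type*} [AddCommMonoid N] [PartialOrder N] [CanonicallyOrderedAdd N]
  [IsOrderedCancelAddMonoid N]

theorem eq_single_of_apply_eq_sum {t : ι → N} {i : ι} (h : t i = ∑ l, t l) :
    t = Pi.single i (∑ l, t l) := by
  have hrest : ∑ l ∈ Finset.univ.erase i, t l = 0 := by
    rwa [← Finset.add_sum_erase _ t (Finset.mem_univ i), left_eq_add] at h
  funext l
  rcases eq_or_ne l i with rfl | hl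
  · rw [Pi.single_eq_same, h]
  · rw [Pi.single_eq_of_ne hl]
    exact Finset.sum_eq_zero_iff.mp hrest l (Finset.mem_erase.mpr ⟨hl, Finset.mem_univ l⟩)

variable [DecidableEq N] [Finset.HasAntidiagonal N]

theorem sum_piAntidiag_prod_of_notMem {R : Type*} [CommSemiring R] {S : AddSubmonoid N}
    {f : ι → N → R} {n : N} (hn : n ∉ S) (hf : ∀ i, ∀ a < n, a ∉ S → f i a = 0) :
    ∑ t ∈ Finset.piAntidiag Finset.univ n, ∏ i, f i (t i) =
      ∑ i, f i n * ∏ l ∈ Finset.univ.erase i, f l 0 := by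
  have hn0 : n ≠ 0 := fun h => hn (h ▸ S.zero_mem)
  symm
  refine Finset.sum_of_injOn (fun i => Pi.single i n) ?injOn ?mapsTo ?unconcentrated
    fun i _ => (prod_apply_single f i n).symm
  case injOn =>
    intro a _ b _ hab
    by_contra hne
    simpa [hne, hn0] using congrFun hab a
  case mapsTo =>
    intro i _
    simp
  case unconcentrated =>
    intro t ht hnot
    obtain rfl : ∑ i, t i = n := (Finset.mem_piAntidiag.mp ht).1
    obtain ⟨i, hi⟩ : ∃ i, t i ∉ S := by
      by_contra! hall
      exact hn (S.sum_mem fun i _ => hall i)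
    have hne : t i ≠ ∑ l, t l := fun h =>
      hnot ⟨i, Finset.mem_coe.mpr (Finset.mem_univ i), (eq_single_of_apply_eq_sum h).symm⟩
    have hlt : t i < ∑ l, t l :=
      (Finset.single_le_sum_of_canonicallyOrdered (Finset.mem_univ i)).lt_of_ne hne
    exact Finset.prod_eq_zero (Finset.mem_univ i) (hf i _ hlt hi)

theorem eq_zero_of_notMem_of_recursion [WellFoundedLT N] {R : Type*} [CommSemiring R]
    [IsCancelMulZero R] {a : N → R} {w : ι → N → R} {c : N → R}
    (hrec : ∀ n, 0 < n →
      a n * c n = ∑ t ∈ Finset.piAntidiag Finset.univ n, ∏ i, w i (t i) * c (t i))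
    (S : AddSubmonoid N)
    (hS : ∀ n, 0 < n → a n = ∑ i, w i n * ∏ l ∈ Finset.univ.erase i, w l 0 * c 0 → n ∈ S)
    {n : N} (hn : n ∉ S) : c n = 0 := by
  induction n using WellFoundedLT.induction with
  | ind n ih =>
    have hpos : 0 < n := pos_iff_ne_zero.mpr fun h => hn (h ▸ S.zero_mem)
    have hlin : a n * c n =
        (∑ i, w i n * ∏ l ∈ Finset.univ.erase i, w l 0 * c 0) * c n := by
      rw [hrec n hpos, sum_piAntidiag_prod_of_notMem (f := fun i b => w i b * c b) hn
        fun i b hb hbS => by rw [ih b hb hbS, mul_zero], Finset.sum_mul]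
      exact Finset.sum_congr rfl fun i _ => mul_right_comm _ _ _
    by_contra hc
    exact hn (hS n hpos (mul_right_cancel₀ hc hlin))

end Tuples

section AssocPoly

variable {K : Type*} [Field K] [CharZero K] {k d m : ℕ} {j : Fin d → ℕ} {c₀ : K}

theorem prod_erase_fall_neg_mul (hm : 0 < m)
    (hinit : c₀ ^ (d - 1) = (fall (-(m : ℤ)) k : K) / ∏ i, (fall (-(m : ℤ)) (j i) : K))
    {i : Fin d} (hi : j i ≤ k) :
    ∏ l ∈ Finset.univ.erase i, (fall (-(m : ℤ)) (j l) : K) * c₀ =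
      (-1) ^ (k - j i) * fall (k + m - 1) (k - j i) := by
  have hne : ∀ l, (fall (-(m : ℤ)) (j l) : K) ≠ 0 := fun l =>
    Int.cast_ne_zero.mpr (fall_ne_zero_of_neg (by omega) _)
  refine mul_left_cancel₀ (hne i) ?_
  calc (fall (-(m : ℤ)) (j i) : K) *
        ∏ l ∈ Finset.univ.erase i, (fall (-(m : ℤ)) (j l) : K) * c₀
      = c₀ ^ (d - 1) * ∏ l, (fall (-(m : ℤ)) (j l) : K) := by
        rw [← Finset.mul_prod_erase _ _ (Finset.mem_univ i), Finset.prod_mul_distrib,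
          Finset.prod_const, Finset.card_erase_of_mem (Finset.mem_univ i), Finset.card_fin]
        ring
    _ = fall (-(m : ℤ)) k := by
        rw [hinit, div_mul_cancel₀ _ (Finset.prod_ne_zero_iff.mpr fun l _ => hne l)]
    _ = fall (-(m : ℤ)) (j i) * ((-1) ^ (k - j i) * fall (k + m - 1) (k - j i)) := by
        exact_mod_cast fall_neg_eq_mul_of_le (m : ℤ) hi

theorem cast_assocPoly (hm : 0 < m) (hj : ∀ i, j i ≤ k)
    (hinit : c₀ ^ (d - 1) = (fall (-(m : ℤ)) k : K) / ∏ i, (fall (-(m : ℤ)) (j i) : K)) (x : ℤ) :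
    (assocPoly k m d j x : K) = fall (x - m) k -
      ∑ i, (fall (x - m) (j i) : K) *
        ∏ l ∈ Finset.univ.erase i, (fall (-(m : ℤ)) (j l) : K) * c₀ := by
  simp only [assocPoly, prod_erase_fall_neg_mul hm hinit (hj _)]
  push_cast
  simp only [mul_comm (fall (x - m) _ : K)]

end AssocPoly

theorem laurent_coefficients_vanish_general {K : Type*} [Field K] [CharZero K]
    {k d m : ℕ} (hm : 0 < m) {j : Fin d → ℕ} (hj : ∀ i, j i ≤ k) {c : ℕ → K}
    (hinit : c 0 ^ (d - 1) =
      (fall (-(m : ℤ)) k : K) / ∏ i : Fin d, (fall (-(m : ℤ)) (j i) : K))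
    (hrec : ∀ n : ℕ, 1 ≤ n →
      (fall ((n : ℤ) - (m : ℤ)) k : K) * c n =
        ∑ t ∈ Finset.Nat.antidiagonalTuple d n,
          ∏ i : Fin d, (fall ((t i : ℤ) - (m : ℤ)) (j i) : K) * c (t i))
    (S : AddSubmonoid ℕ) (hS : ∀ r : ℕ, 0 < r → assocPoly k m d j (r : ℤ) = 0 → r ∈ S)
    {n : ℕ} (hn : n ∉ S) : c n = 0 := by
  simp only [← Finset.piAntidiag_univ_fin_eq_antidiagonalTuple] at hrec
  refine eq_zero_of_notMem_of_recursion (w := fun i (b : ℕ) => (fall ((b : ℤ) - m) (j i) : K))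
    hrec S (fun r hr hcoeff => hS r hr ?_) hn
  rw [← Int.cast_eq_zero (α := K), cast_assocPoly hm hj hinit, sub_eq_zero, hcoeff]
  simp only [Nat.cast_zero, zero_sub]

/-- The coefficients of a formal Laurent series solution of
`f⁽ᵏ⁾ = f⁽ʲ¹⁾ ⋯ f⁽ʲᵈ⁾` with a pole of multiplicity `m` vanish in degrees prescribed by the
positive integer roots of the associated polynomial. -/
theorem laurent_coefficients_vanish
    (k d m : ℕ) (hk : 0 < k) (hd : 1 < d) (hm : 0 < m)
    (j : Fin d → ℕ) (hj : ∀ i, j i < k)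
    (hsum : k + m = ∑ i : Fin d, (j i + m))
    (c : ℕ → ℂ) (hc0 : c 0 ≠ 0)
    (hinit : c 0 ^ (d - 1) =
      (fall (-(m : ℤ)) k : ℂ) / ∏ i : Fin d, (fall (-(m : ℤ)) (j i) : ℂ))
    (hrec : ∀ n : ℕ, 1 ≤ n →
      (fall ((n : ℤ) - (m : ℤ)) k : ℂ) * c n =
        ∑ t ∈ Finset.Nat.antidiagonalTuple d n,
          ∏ i : Fin d, (fall ((t i : ℤ) - (m : ℤ)) (j i) : ℂ) * c (t i)) :
    ((∀ r : ℕ, 0 < r → assocPoly k m d j (r : ℤ) ≠ 0) → ∀ n : ℕ, 1 ≤ n → c n = 0) ∧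
      ((∃ r : ℕ, 0 < r ∧ assocPoly k m d j (r : ℤ) = 0) →
        ∀ q : ℕ, IsGcdOfPosRoots (assocPoly k m d j) q →
          ∀ n : ℕ, 1 ≤ n → ¬ q ∣ n → c n = 0) := by
  have hj' : ∀ i, j i ≤ k := fun i => (hj i).le
  refine ⟨fun h n hn => ?_, fun _ q hq n _ hqn => ?_⟩
  · exact laurent_coefficients_vanish_general hm hj' hinit hrec ⊥
      (fun r hr h0 => absurd h0 (h r hr)) (Nat.ne_of_gt hn)
  · exact laurent_coefficients_vanish_general hm hj' hinit hrec (Ideal.span {q}).toAddSubmonoid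
      (fun r hr h0 => Ideal.mem_span_singleton.mpr (hq.1 r hr h0))
      (mt Ideal.mem_span_singleton.mp hqn)
end
end

section
/- Let k, l, m be positive integers with k > l, let d > 1, and let j_1, …, j_d be integers with 0 ≤ j_i ≤ l for each i, satisfying k + m = Σ_{i=1}^{d} (j_i + m). Then every positive integer root r of the associated polynomial p satisfies r ≤ k + l + 2m; moreover p(k + l + 2m) = 0 if and only if k − l is even and j_i = l for every i. -/
noncomputable section

/-!
Put `y = x - m`. The identity `a (a-1)_n = (a)_n (a-n)` at `a = k + m`, `n = k - j` turns `k + m`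
times a term of the sum into `(j + m) (y)_j · (-1)^n (k+m)_n`, while `(y)_k = (y)_j (y-j)_n`.
When `y - j ≥ k + m`, monotonicity of the falling factorial bounds the former by `(j + m) (y)_k`,
with equality only if `n` is even and `y - j = k + m`. Summed over `i`, the weights `jᵢ + m` add up
to `k + m`, so `p(x) ≥ 0` for all `x ≥ k + l + 2m`, and `p(x) = 0` forces equality in every term.
-/

section FallingFactorial

open Polynomial

theorem mul_descPochhammer_eval_sub_one {R : Type*} [CommRing R] (n : ℕ) (a : R) :
    a * (descPochhammer R n).eval (a - 1) = (descPochhammer R n).eval a * (a - n) := by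
  rw [← descPochhammer_succ_eval, descPochhammer_succ_left]
  simp only [eval_mul, eval_X, eval_comp, eval_sub, eval_one]

theorem descPochhammer_eval_add {R : Type*} [CommRing R] (n k : ℕ) (a : R) :
    (descPochhammer R (n + k)).eval a =
      (descPochhammer R n).eval a * (descPochhammer R k).eval (a - n) := by
  rw [← descPochhammer_mul]
  simp only [eval_mul, eval_comp, eval_sub, eval_X, eval_natCast]

variable {R : Type*} [CommRing R] [LinearOrder R] [IsStrictOrderedRing R] {n : ℕ} {a b : R}

theorem strictMonoOn_descPochhammer_eval (hn : n ≠ 0) :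
    StrictMonoOn (descPochhammer R n).eval (Set.Ici (n - 1 : R)) := by
  obtain ⟨n, rfl⟩ := Nat.exists_eq_succ_of_ne_zero hn
  intro a ha b hb hab
  rw [Nat.succ_eq_add_one, Nat.cast_add_one, add_sub_cancel_right, Set.mem_Ici] at ha hb
  have hmono : (descPochhammer R n).eval a ≤ (descPochhammer R n).eval b :=
    monotoneOn_descPochhammer_eval n (Set.mem_Ici.2 (by linarith)) (Set.mem_Ici.2 (by linarith))
      hab.le
  simp only [Nat.succ_eq_add_one, descPochhammer_succ_eval]
  exact mul_lt_mul' hmono (sub_lt_sub_right hab _) (sub_nonneg.2 ha)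
    (descPochhammer_pos (by linarith))

theorem neg_one_pow_mul_descPochhammer_eval_le (ha : n - 1 ≤ a) (hab : a ≤ b) :
    (-1) ^ n * (descPochhammer R n).eval a ≤ (descPochhammer R n).eval b :=
  calc (-1) ^ n * (descPochhammer R n).eval a
      ≤ |(-1) ^ n * (descPochhammer R n).eval a| := le_abs_self _
    _ = (descPochhammer R n).eval a := by
      rw [abs_mul, abs_neg_one_pow, one_mul, abs_of_nonneg (descPochhammer_nonneg ha)]
    _ ≤ (descPochhammer R n).eval b := monotoneOn_descPochhammer_eval n ha (ha.trans hab) hab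

theorem neg_one_pow_mul_descPochhammer_eval_eq_iff (hn : n ≠ 0) (ha : n - 1 < a) (hab : a ≤ b) :
    (-1) ^ n * (descPochhammer R n).eval a = (descPochhammer R n).eval b ↔ Even n ∧ a = b := by
  rcases n.even_or_odd with heven | hodd
  · rw [heven.neg_one_pow, one_mul,
      (strictMonoOn_descPochhammer_eval hn).eq_iff_eq ha.le (ha.le.trans hab)]
    exact (and_iff_right heven).symm
  · have hpos_a : 0 < (descPochhammer R n).eval a := descPochhammer_pos ha
    have hpos_b : 0 < (descPochhammer R n).eval b := descPochhammer_pos (ha.trans_le hab)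
    rw [hodd.neg_one_pow]
    refine iff_of_false (by linarith) fun h => Nat.not_even_iff_odd.2 hodd h.1

end FallingFactorial

section AssocPolynomial

open Polynomial

/-- The term `(-1)^{k-j} (k+m-1)_{k-j} (X-m)_j` contributed by one factor `f⁽ʲ⁾` to the associated
polynomial. The multiplicity `m` may be any element of the coefficient ring; the subtraction `k - j`
is truncated, so the definition is meant for `j ≤ k`. -/
def assocTerm {R : Type*} [CommRing R] (m : R) (k j : ℕ) : R[X] :=
  C ((-1) ^ (k - j) * (descPochhammer R (k - j)).eval (k + m - 1)) *
    (descPochhammer R j).comp (X - C m)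

/-- The associated polynomial `(X-m)_k - ∑ᵢ (-1)^{k-jᵢ} (k+m-1)_{k-jᵢ} (X-m)_{jᵢ}` over an arbitrary
commutative ring, with `m` in that ring; `assocPoly` gives its values over `ℤ`. -/
def assocPolynomial {R ι : Type*} [CommRing R] [Fintype ι] (m : R) (k : ℕ) (j : ι → ℕ) : R[X] :=
  (descPochhammer R k).comp (X - C m) - ∑ i, assocTerm m k (j i)

theorem eval_assocTerm {R : Type*} [CommRing R] (m x : R) (k j : ℕ) :
    (assocTerm m k j).eval x =
      (-1) ^ (k - j) * (descPochhammer R (k - j)).eval (k + m - 1) *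
        (descPochhammer R j).eval (x - m) := by
  simp only [assocTerm, eval_mul, eval_C, eval_comp, eval_sub, eval_X]

theorem eval_assocPolynomial {R ι : Type*} [CommRing R] [Fintype ι] (m x : R) (k : ℕ)
    (j : ι → ℕ) :
    (assocPolynomial m k j).eval x =
      (descPochhammer R k).eval (x - m) - ∑ i, (assocTerm m k (j i)).eval x := by
  simp only [assocPolynomial, eval_sub, eval_comp, eval_X, eval_C, eval_finsetSum]

theorem assocPoly_eq_eval (k m d : ℕ) (j : Fin d → ℕ) (x : ℤ) :
    assocPoly k m d j x = (assocPolynomial (m : ℤ) k j).eval x := by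
  simp only [assocPoly, fall, eval_assocPolynomial, eval_assocTerm,
    descPochhammer_eval_eq_prod_range]

theorem add_mul_eval_assocTerm {R : Type*} [CommRing R] {k j : ℕ} (hjk : j ≤ k) (m x : R) :
    (k + m) * (assocTerm m k j).eval x =
      (j + m) * (descPochhammer R j).eval (x - m) *
        ((-1) ^ (k - j) * (descPochhammer R (k - j)).eval (k + m)) := by
  have hshift := mul_descPochhammer_eval_sub_one (k - j) (k + m)
  rw [Nat.cast_sub hjk] at hshift
  rw [eval_assocTerm]
  linear_combination (-1) ^ (k - j) * (descPochhammer R j).eval (x - m) * hshift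

variable {R : Type*} [CommRing R] [LinearOrder R] [IsStrictOrderedRing R] {k l : ℕ} {m x : R}

theorem add_mul_eval_assocTerm_le {j : ℕ} (hm : 0 < m) (hjk : j ≤ k)
    (hx : k + j + 2 * m ≤ x) :
    (k + m) * (assocTerm m k j).eval x ≤ (j + m) * (descPochhammer R k).eval (x - m) := by
  have hle : (-1) ^ (k - j) * (descPochhammer R (k - j)).eval (k + m) ≤
      (descPochhammer R (k - j)).eval (x - m - j) :=
    neg_one_pow_mul_descPochhammer_eval_le (by rw [Nat.cast_sub hjk]; linarith) (by linarith)
  have hfall : 0 ≤ (descPochhammer R j).eval (x - m) := descPochhammer_nonneg (by linarith)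
  calc (k + m) * (assocTerm m k j).eval x
      = (j + m) * (descPochhammer R j).eval (x - m) *
          ((-1) ^ (k - j) * (descPochhammer R (k - j)).eval (k + m)) :=
        add_mul_eval_assocTerm hjk m x
    _ ≤ (j + m) * (descPochhammer R j).eval (x - m) *
          (descPochhammer R (k - j)).eval (x - m - j) := by gcongr
    _ = (j + m) * (descPochhammer R k).eval (x - m) := by
        rw [mul_assoc, ← descPochhammer_eval_add, Nat.add_sub_cancel' hjk]

theorem add_mul_eval_assocTerm_eq_iff {j : ℕ} (hm : 0 < m) (hjk : j < k)
    (hx : k + j + 2 * m ≤ x) :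
    (k + m) * (assocTerm m k j).eval x = (j + m) * (descPochhammer R k).eval (x - m) ↔
      Even (k - j) ∧ x = k + j + 2 * m := by
  have hfall : 0 < (descPochhammer R j).eval (x - m) := descPochhammer_pos (by linarith)
  have hfactor : (j + m) * (descPochhammer R j).eval (x - m) ≠ 0 := by positivity
  have hsplit : (j + m) * (descPochhammer R k).eval (x - m) =
      (j + m) * (descPochhammer R j).eval (x - m) *
        (descPochhammer R (k - j)).eval (x - m - j) := by
    rw [mul_assoc, ← descPochhammer_eval_add, Nat.add_sub_cancel' hjk.le]
  rw [add_mul_eval_assocTerm hjk.le, hsplit, mul_right_inj' hfactor,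
    neg_one_pow_mul_descPochhammer_eval_eq_iff (Nat.sub_ne_zero_of_lt hjk)
      (by rw [Nat.cast_sub hjk.le]; linarith) (by linarith)]
  refine and_congr_right fun _ => ⟨fun h => ?_, fun h => ?_⟩ <;> linear_combination -h

variable {ι : Type*} [Fintype ι] {j : ι → ℕ}

theorem isRoot_assocPolynomial_iff_of_le (hm : 0 < m) (hkl : l < k) (hj : ∀ i, j i ≤ l)
    (hsum : k + m = ∑ i, (j i + m)) (hx : k + l + 2 * m ≤ x) :
    (assocPolynomial m k j).IsRoot x ↔ ∀ i, Even (k - j i) ∧ x = k + j i + 2 * m := by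
  have hjk (i : ι) : j i < k := (hj i).trans_lt hkl
  have hxj (i : ι) : k + j i + 2 * m ≤ x := by
    have : (j i : R) ≤ l := mod_cast hj i
    linarith
  have hkm : (k : R) + m ≠ 0 := by positivity
  calc (assocPolynomial m k j).IsRoot x
      ↔ ∑ i, (assocTerm m k (j i)).eval x = (descPochhammer R k).eval (x - m) := by
        rw [IsRoot.def, eval_assocPolynomial, sub_eq_zero, eq_comm]
    _ ↔ ∑ i, (k + m) * (assocTerm m k (j i)).eval x =
          ∑ i, (j i + m) * (descPochhammer R k).eval (x - m) := by
        rw [← Finset.mul_sum, ← Finset.sum_mul, ← hsum, mul_right_inj' hkm]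
    _ ↔ ∀ i, (k + m) * (assocTerm m k (j i)).eval x =
          (j i + m) * (descPochhammer R k).eval (x - m) := by
        rw [Finset.sum_eq_sum_iff_of_le fun i _ =>
          add_mul_eval_assocTerm_le hm (hjk i).le (hxj i)]
        simp only [Finset.mem_univ, true_imp_iff]
    _ ↔ ∀ i, Even (k - j i) ∧ x = k + j i + 2 * m :=
        forall_congr' fun i => add_mul_eval_assocTerm_eq_iff hm (hjk i) (hxj i)

theorem roots_le_k_add_l_add_two_m_general (hm : 0 < m) (hkl : l < k) (hj : ∀ i, j i ≤ l)
    (hsum : k + m = ∑ i, (j i + m)) :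
    (∀ x, (assocPolynomial m k j).IsRoot x → x ≤ k + l + 2 * m) ∧
      ((assocPolynomial m k j).IsRoot (k + l + 2 * m) ↔ Even (k - l) ∧ ∀ i, j i = l) := by
  have hne : Nonempty ι := by
    have hsum_ne : ∑ i, (j i + m) ≠ 0 := hsum ▸ by positivity
    exact Finset.univ_nonempty_iff.1 (Finset.nonempty_of_sum_ne_zero hsum_ne)
  refine ⟨fun x hroot => ?_, ?_⟩
  · by_contra! hlt
    obtain ⟨i⟩ := hne
    have heq := ((isRoot_assocPolynomial_iff_of_le hm hkl hj hsum hlt.le).1 hroot i).2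
    have hji : (j i : R) ≤ l := mod_cast hj i
    linarith
  · have hcast (i : ι) : (k + l + 2 * m : R) = k + j i + 2 * m ↔ j i = l := by
      rw [add_left_inj, add_right_inj, Nat.cast_inj, eq_comm]
    rw [isRoot_assocPolynomial_iff_of_le hm hkl hj hsum le_rfl]
    simp only [hcast, forall_and]
    exact and_congr_left fun hjl => by simp only [hjl, forall_const]

end AssocPolynomial

/-- Every positive integer root `r` of the associated polynomial
satisfies `r ≤ k + l + 2m`; and `p(k + l + 2m) = 0` iff `k - l` is even and every `jᵢ = l`. -/
theorem roots_le_k_add_l_add_two_m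
    (k l d m : ℕ) (hk : 0 < k) (hl : 0 < l) (hm : 0 < m) (hkl : l < k) (hd : 1 < d)
    (j : Fin d → ℕ) (hj : ∀ i, j i ≤ l)
    (hsum : k + m = ∑ i : Fin d, (j i + m)) :
    (∀ r : ℕ, 0 < r → assocPoly k m d j (r : ℤ) = 0 → r ≤ k + l + 2 * m) ∧
      (assocPoly k m d j ((k : ℤ) + l + 2 * m) = 0 ↔ Even (k - l) ∧ ∀ i, j i = l) := by
  have general := roots_le_k_add_l_add_two_m_general (m := (m : ℤ)) (mod_cast hm) hkl hj
    (mod_cast hsum)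
  simp only [assocPoly_eq_eval]
  exact ⟨fun r _ hroot => mod_cast general.1 r hroot, general.2⟩
end
end

section
/- Let d > 1 and let s, s_1, …, s_d, r be positive integers with s ≤ r and s_i ≤ r for each i. If C(r−1, s_1−1) + C(r−1, s_2−1) + ⋯ + C(r−1, s_d−1) = C(r−1, s−1) and s_1 + ⋯ + s_d ≤ s, then s_1 = s_2 = ⋯ = s_d, s = d·s_1, and r = (d+1)·s_1. -/
/-!
Since `r * C(r-1, a-1) = a * C(r, a)`, the hypothesis reads `∑ sᵢ * C(r, sᵢ) = s * C(r, s)`. As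
`d > 1`, each `C(r-1, sᵢ-1)` is less than `C(r-1, s-1)` while `sᵢ < s`, so unimodality of row
`r - 1` of Pascal's triangle gives `sᵢ + s ≤ r`, and unimodality of row `r` then gives
`C(r, sᵢ) ≤ C(r, s)`. Together with `∑ sᵢ ≤ s` this forces `C(r, sᵢ) = C(r, s)` for every `i`,
that is `sᵢ = r - s`, as well as `∑ sᵢ = s`.
-/

open Finset

section Choose

variable {n k j : ℕ}

theorem choose_strictMonoOn_Iic_half (n : ℕ) : StrictMonoOn n.choose (Set.Iic (n / 2)) := by
  refine strictMonoOn_of_lt_add_one Set.ordConnected_Iic fun k _ _ hk ↦ ?_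
  have hkn : k + 1 ≤ n / 2 := hk
  refine lt_of_mul_lt_mul_right ?_ (Nat.zero_le (k + 1))
  calc n.choose k * (k + 1)
      < n.choose k * (n - k) := Nat.mul_lt_mul_of_pos_left (by omega) (Nat.choose_pos (by omega))
    _ = n.choose (k + 1) * (k + 1) := (Nat.choose_succ_right_eq n k).symm

theorem choose_lt_choose_of_add_lt (hkj : k < j) (h : k + j < n) : n.choose k < n.choose j := by
  have hk : k ≤ n / 2 := by omega
  rcases le_or_gt j (n / 2) with hj | hj
  · exact choose_strictMonoOn_Iic_half n hk hj hkj
  · rw [← Nat.choose_symm (show j ≤ n by omega)]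
    exact choose_strictMonoOn_Iic_half n hk (show n - j ≤ n / 2 by omega) (by omega)

theorem choose_le_choose_of_add_le (hkj : k ≤ j) (h : k + j ≤ n) : n.choose k ≤ n.choose j := by
  rcases hkj.lt_or_eq with hlt | rfl
  · rcases h.lt_or_eq with hadd | hadd
    · exact (choose_lt_choose_of_add_lt hlt hadd).le
    · exact (Nat.choose_symm_of_eq_add hadd.symm).le
  · exact le_rfl

theorem add_lt_of_choose_lt_choose (hkj : k ≤ j) (h : n.choose k < n.choose j) : k + j < n := by
  have hj : j ≤ n := by
    by_contra! hnj
    simp only [Nat.choose_eq_zero_of_lt hnj, not_lt_zero] at h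
  by_contra! hn
  have hle : n.choose (n - j) ≤ n.choose (n - k) :=
    choose_le_choose_of_add_le (by omega) (by omega)
  rw [Nat.choose_symm hj, Nat.choose_symm (hkj.trans hj)] at hle
  exact hle.not_gt h

theorem mul_choose_pred_pred (hk : 0 < k) : n * (n - 1).choose (k - 1) = k * n.choose k := by
  obtain ⟨k, rfl⟩ := Nat.exists_eq_add_one.2 hk
  cases n with
  | zero => rw [Nat.choose_zero_succ, zero_mul, mul_zero]
  | succ n =>
    rw [Nat.add_sub_cancel, Nat.add_sub_cancel, Nat.add_one_mul_choose_eq, mul_comm]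

theorem sum_mul_choose_eq_of_sum_choose_pred_eq {ι : Type*} {t : Finset ι} {f : ι → ℕ} {s r : ℕ}
    (hf : ∀ i ∈ t, 0 < f i) (hs : 0 < s)
    (h : ∑ i ∈ t, (r - 1).choose (f i - 1) = (r - 1).choose (s - 1)) :
    ∑ i ∈ t, f i * r.choose (f i) = s * r.choose s := by
  rw [← mul_choose_pred_pred hs, ← h, mul_sum]
  exact sum_congr rfl fun i hi ↦ (mul_choose_pred_pred (hf i hi)).symm

end Choose

theorem eq_and_sum_eq_of_sum_mul_eq {ι R : Type*} [Semiring R] [PartialOrder R]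
    [IsStrictOrderedRing R] {t : Finset ι} {w c : ι → R} {W C : R} (hw : ∀ i ∈ t, 0 < w i)
    (hC : 0 < C) (hc : ∀ i ∈ t, c i ≤ C) (hW : ∑ i ∈ t, w i ≤ W)
    (h : ∑ i ∈ t, w i * c i = W * C) : (∀ i ∈ t, c i = C) ∧ ∑ i ∈ t, w i = W := by
  have hterm : ∀ i ∈ t, w i * c i ≤ w i * C := fun i hi ↦
    mul_le_mul_of_nonneg_left (hc i hi) (hw i hi).le
  have hlower : W * C ≤ (∑ i ∈ t, w i) * C := by
    rw [← h, sum_mul]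
    exact sum_le_sum hterm
  have hsum : ∑ i ∈ t, w i = W :=
    hW.eq_of_not_lt fun hlt ↦ (mul_lt_mul_of_pos_right hlt hC).not_ge hlower
  have hmul : ∑ i ∈ t, w i * c i = ∑ i ∈ t, w i * C := by rw [h, ← hsum, sum_mul]
  have hterm_eq := (sum_eq_sum_iff_of_le hterm).1 hmul
  exact ⟨fun i hi ↦ (hc i hi).eq_of_not_lt fun hlt ↦
    (mul_lt_mul_of_pos_left hlt (hw i hi)).ne (hterm_eq i hi), hsum⟩

section Fintype

variable {ι : Type*} [Fintype ι]

theorem lt_sum_of_forall_pos [Nontrivial ι] {M : Type*} [AddCommMonoid M] [PartialOrder M]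
    [IsOrderedCancelAddMonoid M] {f : ι → M} (hf : ∀ i, 0 < f i) (i : ι) : f i < ∑ j, f j := by
  obtain ⟨j, hji⟩ := exists_ne i
  exact single_lt_sum hji (mem_univ i) (mem_univ j) (hf j) fun k _ _ ↦ (hf k).le

theorem add_le_of_sum_choose_pred_eq [Nontrivial ι] {f : ι → ℕ} {s r : ℕ} (hfs : ∀ i, f i < s)
    (hsr : s ≤ r) (h : ∑ i, (r - 1).choose (f i - 1) = (r - 1).choose (s - 1)) (i : ι) :
    f i + s ≤ r := by
  have hpos : ∀ j, 0 < (r - 1).choose (f j - 1) := fun j ↦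
    Nat.choose_pos (Nat.sub_le_sub_right ((hfs j).le.trans hsr) 1)
  have hlt : (r - 1).choose (f i - 1) < (r - 1).choose (s - 1) :=
    (lt_sum_of_forall_pos hpos i).trans_eq h
  have hpred : f i - 1 + (s - 1) < r - 1 :=
    add_lt_of_choose_lt_choose (Nat.sub_le_sub_right (hfs i).le 1) hlt
  omega

theorem binomial_diophantine_general [Nontrivial ι] {f : ι → ℕ} {s r : ℕ} (hf : ∀ i, 0 < f i)
    (hsr : s ≤ r) (hchoose : ∑ i, (r - 1).choose (f i - 1) = (r - 1).choose (s - 1))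
    (hsum : ∑ i, f i ≤ s) :
    ∃ u, (∀ i, f i = u) ∧ s = Fintype.card ι * u ∧ r = (Fintype.card ι + 1) * u := by
  have hfs : ∀ i, f i < s := fun i ↦ (lt_sum_of_forall_pos hf i).trans_le hsum
  have hs : 0 < s := (Nat.zero_le _).trans_lt (hfs (Classical.arbitrary ι))
  have hadd : ∀ i, f i + s ≤ r := add_le_of_sum_choose_pred_eq hfs hsr hchoose
  obtain ⟨hchoose_eq, hsum_eq⟩ :=
    eq_and_sum_eq_of_sum_mul_eq (fun i _ ↦ hf i) (Nat.choose_pos hsr)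
      (fun i _ ↦ choose_le_choose_of_add_le (hfs i).le (hadd i)) hsum
      (sum_mul_choose_eq_of_sum_choose_pred_eq (fun i _ ↦ hf i) hs hchoose)
  have hf_eq : ∀ i, f i = r - s := fun i ↦ by
    have hadd_eq : f i + s = r := (hadd i).eq_of_not_lt fun hlt ↦
      (choose_lt_choose_of_add_lt (hfs i) hlt).ne (hchoose_eq i (mem_univ i))
    exact Nat.eq_sub_of_add_eq hadd_eq
  have hcard : s = Fintype.card ι * (r - s) := by
    simpa only [hf_eq, sum_const, card_univ, smul_eq_mul] using hsum_eq.symm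
  refine ⟨r - s, hf_eq, hcard, ?_⟩
  rw [add_one_mul, ← hcard, Nat.add_sub_cancel' hsr]

end Fintype

/-- If positive integers `s, s_1, …, s_d, r` with `d > 1`, `s ≤ r`,
`sᵢ ≤ r` satisfy `∑ᵢ C(r-1, sᵢ-1) = C(r-1, s-1)` and `∑ᵢ sᵢ ≤ s`, then all the `sᵢ` are
equal, `s = d·s₁` and `r = (d+1)·s₁`. -/
theorem binomial_diophantine
    (d : ℕ) (hd : 1 < d) (s r : ℕ) (si : Fin d → ℕ)
    (hs : 0 < s) (hr : 0 < r) (hsi : ∀ i, 0 < si i)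
    (hsr : s ≤ r) (hsir : ∀ i, si i ≤ r)
    (heq : ∑ i : Fin d, Nat.choose (r - 1) (si i - 1) = Nat.choose (r - 1) (s - 1))
    (hle : ∑ i : Fin d, si i ≤ s) :
    ∃ u : ℕ, (∀ i, si i = u) ∧ s = d * u ∧ r = (d + 1) * u := by
  have : Nontrivial (Fin d) := Fin.nontrivial_iff_two_le.2 hd
  simpa only [Fintype.card_fin] using binomial_diophantine_general hsi hsr heq hle
end

section
/- Let k, d, m be positive integers with d > 1, let j_1, …, j_d be integers with 0 ≤ j_i < k satisfying k + m = Σ_{i=1}^{d} (j_i + m), and suppose every j_i is even and some j_i equals 0. If it is not the case that k is even and all j_i equal 0, then the associated polynomial p has no positive integer root. If k is even and all j_i equal 0, then (d+1)m is the unique positive integer root of p. -/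
noncomputable section

/-!
Put `y = x - m`, `N = k + m` and `S(y) = ∑ᵢ (N-1)_{k-jᵢ} (y)_{jᵢ}`. Since all `jᵢ` are even, the
roots of `p` are the solutions of `(-1)ᵏ (y)_k = S(y)`, and every summand of `S` is nonnegative,
because `(-n)_j = (-1)ʲ (n+j-1)_j`. For `-m < y < 0` the summand `(N-1)_k` coming from `jᵢ = 0`
alone exceeds `|(y)_k|`, and for `y ≥ 0` the case of odd `k` is a matter of signs.

Let `k` be even, `y ≥ 0` and `jₐ = 0`. If `y < N + jᵢ` for some `i`, then also for some `i ≠ a`, as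
`d > 1`; the `i`-th summand is at least `(y)_k`, and the `a`-th is positive. Otherwise
`N (N-1)_{k-jᵢ} = (jᵢ+m) (N)_{k-jᵢ}` and `N = ∑ᵢ (jᵢ+m)` give
`N ((y)_k - S(y)) = ∑ᵢ (jᵢ+m) (y)_{jᵢ} ((y-jᵢ)_{k-jᵢ} - (N)_{k-jᵢ})`, whose summands are
nonnegative, the `a`-th being positive unless `y = N`. If all `jᵢ` vanish and `y = N`, every
summand is zero.
-/

theorem fall_zero (x : ℤ) : fall x 0 = 1 := Finset.prod_range_zero _

theorem fall_succ (x : ℤ) (j : ℕ) : fall x (j + 1) = fall x j * (x - j) :=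
  Finset.prod_range_succ _ _

theorem fall_eq_fall_mul_fall (x : ℤ) {j k : ℕ} (hjk : j ≤ k) :
    fall x k = fall x j * fall (x - j) (k - j) := by
  rw [← fall_add, Nat.add_sub_cancel' hjk]

theorem fall_succ_left (x : ℤ) (j : ℕ) : fall x (j + 1) = x * fall (x - 1) j := by
  simp [add_comm j, fall_add, fall_succ, fall_zero]

theorem mul_fall_sub_one (x : ℤ) (j : ℕ) : x * fall (x - 1) j = (x - j) * fall x j := by
  rw [← fall_succ_left, fall_succ, mul_comm]

theorem fall_natCast (n j : ℕ) : fall n j = n.descFactorial j := by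
  rw [fall, ← descPochhammer_eval_eq_prod_range, descPochhammer_eval_eq_descFactorial]

theorem fall_nonneg {x : ℤ} (hx : 0 ≤ x) (j : ℕ) : 0 ≤ fall x j := by
  lift x to ℕ using hx
  rw [fall_natCast]
  positivity

theorem fall_pos {x : ℤ} {j : ℕ} (hjx : j ≤ x) : 0 < fall x j := by
  lift x to ℕ using (Int.natCast_nonneg j).trans hjx
  rw [fall_natCast]
  exact_mod_cast Nat.descFactorial_pos.2 (by exact_mod_cast hjx)

theorem fall_le_fall {x y : ℤ} (hx : 0 ≤ x) (hxy : x ≤ y) (j : ℕ) : fall x j ≤ fall y j := by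
  lift x to ℕ using hx
  lift y to ℕ using (Int.natCast_nonneg x).trans hxy
  rw [fall_natCast, fall_natCast]
  exact_mod_cast Nat.descFactorial_le j (by exact_mod_cast hxy)

theorem fall_lt_fall {x y : ℤ} {j : ℕ} (hj : j ≠ 0) (hx : 0 ≤ x) (hxy : x < y) (hjy : j ≤ y) :
    fall x j < fall y j := by
  obtain ⟨j, rfl⟩ := Nat.exists_eq_succ_of_ne_zero hj
  push_cast at hjy
  calc fall x (j + 1) = x * fall (x - 1) j := fall_succ_left x j
    _ ≤ x * fall (y - 1) j := by
      rcases hx.eq_or_lt with rfl | hx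
      · simp
      · exact mul_le_mul_of_nonneg_left (fall_le_fall (by lia) (by lia) j) hx.le
    _ < y * fall (y - 1) j := mul_lt_mul_of_pos_right hxy (fall_pos (by lia))
    _ = fall y (j + 1) := (fall_succ_left y j).symm

theorem neg_one_pow_mul_fall (x : ℤ) (j : ℕ) : (-1) ^ j * fall x j = fall (-x + j - 1) j := by
  induction j with
  | zero => simp [fall_zero]
  | succ j ih =>
    have hshift : -x + ((j + 1 : ℕ) : ℤ) - 1 - 1 = -x + j - 1 := by
      push_cast
      ring
    rw [fall_succ_left (-x + _ - 1), hshift, ← ih, fall_succ]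
    push_cast
    ring

theorem fall_nonneg_of_even {j : ℕ} (hj : Even j) (x : ℤ) : 0 ≤ fall x j := by
  rcases le_or_gt 0 x with hx | hx
  · exact fall_nonneg hx j
  · rw [← one_mul (fall x j), ← hj.neg_one_pow, neg_one_pow_mul_fall]
    exact fall_nonneg (by lia) j

theorem fall_mul_fall_nonneg {n : ℤ} {j : ℕ} (hn : 0 ≤ n) (hj : Even j) (l : ℕ) (x : ℤ) :
    0 ≤ fall n l * fall x j :=
  mul_nonneg (fall_nonneg hn l) (fall_nonneg_of_even hj x)

theorem fall_le_fall_mul_fall {x n : ℤ} {j k : ℕ} (hjk : j ≤ k) (hx : 0 ≤ x) (hxn : x - j ≤ n) :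
    fall x k ≤ fall n (k - j) * fall x j := by
  rcases lt_or_ge x j with hxj | hxj
  · have hzero : fall x j = 0 := by
      lift x to ℕ using hx
      rw [fall_natCast, Nat.descFactorial_of_lt (by exact_mod_cast hxj), Nat.cast_zero]
    simp [fall_eq_fall_mul_fall x hjk, hzero]
  · rw [fall_eq_fall_mul_fall x hjk, mul_comm]
    exact mul_le_mul_of_nonneg_right (fall_le_fall (by lia) hxn _) (fall_nonneg hx j)

section UnsignedSum

variable {ι : Type*} [Fintype ι] {k m : ℕ} {j : ι → ℕ} {y : ℤ}

/-- The sum `S(y) = ∑ᵢ (k+m-1)_{k-jᵢ} (y)_{jᵢ}` subtracted in the associated polynomial, without the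
signs `(-1)^{k-jᵢ}` and in the shifted variable `y = x - m`. -/
def unsignedSum (k m : ℕ) (j : ι → ℕ) (y : ℤ) : ℤ :=
  ∑ i, fall ((k : ℤ) + m - 1) (k - j i) * fall y (j i)

theorem assocPoly_eq_zero_iff {d : ℕ} {j : Fin d → ℕ} (hj : ∀ i, j i ≤ k)
    (heven : ∀ i, Even (j i)) (x : ℤ) :
    assocPoly k m d j x = 0 ↔ (-1) ^ k * fall (x - m) k = unsignedSum k m j (x - m) := by
  have hsign (i : Fin d) : (-1 : ℤ) ^ (k - j i) = (-1) ^ k := by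
    rw [← Nat.sub_add_cancel (hj i), pow_add, (heven i).neg_one_pow, mul_one, Nat.add_sub_cancel]
  have hpoly : assocPoly k m d j x = fall (x - m) k - (-1) ^ k * unsignedSum k m j (x - m) := by
    simp only [assocPoly, unsignedSum, hsign, Finset.mul_sum, mul_assoc]
  rcases neg_one_pow_eq_or ℤ k with hk | hk <;> rw [hpoly, hk] <;> constructor <;> intro h <;>
    linarith

theorem fall_le_unsignedSum (hm : 0 < m) (heven : ∀ i, Even (j i)) {i₀ : ι} (hi₀ : j i₀ = 0)
    (y : ℤ) : fall ((k : ℤ) + m - 1) k ≤ unsignedSum k m j y := by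
  calc fall ((k : ℤ) + m - 1) k
      = fall ((k : ℤ) + m - 1) (k - j i₀) * fall y (j i₀) := by simp [hi₀, fall_zero]
    _ ≤ unsignedSum k m j y :=
        Finset.single_le_sum (f := fun i ↦ fall ((k : ℤ) + m - 1) (k - j i) * fall y (j i))
          (fun i _ ↦ fall_mul_fall_nonneg (by lia) (heven i) _ y) (Finset.mem_univ i₀)

theorem neg_one_pow_mul_fall_lt_unsignedSum_of_neg (hk : k ≠ 0) (heven : ∀ i, Even (j i)) {i₀ : ι}
    (hi₀ : j i₀ = 0) (hmy : -(m : ℤ) < y) (hy : y < 0) :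
    (-1) ^ k * fall y k < unsignedSum k m j y :=
  calc (-1) ^ k * fall y k = fall (-y + k - 1) k := neg_one_pow_mul_fall y k
    _ < fall ((k : ℤ) + m - 1) k := fall_lt_fall hk (by lia) (by lia) (by lia)
    _ ≤ unsignedSum k m j y := fall_le_unsignedSum (by lia) heven hi₀ y

theorem neg_one_pow_mul_fall_lt_unsignedSum_of_odd (hm : 0 < m) (hk : Odd k)
    (heven : ∀ i, Even (j i)) {i₀ : ι} (hi₀ : j i₀ = 0) (hy : 0 ≤ y) :
    (-1) ^ k * fall y k < unsignedSum k m j y :=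
  calc (-1) ^ k * fall y k = -fall y k := by rw [hk.neg_one_pow, neg_one_mul]
    _ ≤ 0 := neg_nonpos.2 (fall_nonneg hy k)
    _ < fall ((k : ℤ) + m - 1) k := fall_pos (by lia)
    _ ≤ unsignedSum k m j y := fall_le_unsignedSum hm heven hi₀ y

theorem fall_lt_unsignedSum [Nontrivial ι] (hm : 0 < m) (hj : ∀ i, j i ≤ k)
    (heven : ∀ i, Even (j i)) {i₀ : ι} (hi₀ : j i₀ = 0) (hy : 0 ≤ y)
    (hlt : ∃ i, y < k + m + j i) : fall y k < unsignedSum k m j y := by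
  obtain ⟨i, hne, hi⟩ : ∃ i ≠ i₀, y < k + m + j i := by
    obtain ⟨i, hi⟩ := hlt
    rcases eq_or_ne i i₀ with rfl | hne
    · obtain ⟨i', hne⟩ := exists_ne i
      exact ⟨i', hne, by lia⟩
    · exact ⟨i, hne, hi⟩
  have hpos : 0 < fall ((k : ℤ) + m - 1) (k - j i₀) * fall y (j i₀) := by
    rw [hi₀, fall_zero, mul_one]
    exact fall_pos (by lia)
  calc fall y k ≤ fall ((k : ℤ) + m - 1) (k - j i) * fall y (j i) :=
        fall_le_fall_mul_fall (hj i) hy (by lia)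
    _ < unsignedSum k m j y :=
        Finset.single_lt_sum hne.symm (Finset.mem_univ i) (Finset.mem_univ i₀) hpos
          fun i' _ _ ↦ fall_mul_fall_nonneg (by lia) (heven i') _ y

theorem mul_fall_sub_unsignedSum (hj : ∀ i, j i ≤ k) (hsum : k + m = ∑ i, (j i + m)) (y : ℤ) :
    (k + m) * (fall y k - unsignedSum k m j y) =
      ∑ i, (j i + m) * fall y (j i) * (fall (y - j i) (k - j i) - fall (k + m) (k - j i)) := by
  have hweights : (k : ℤ) + m = ∑ i, ((j i : ℤ) + m) := by exact_mod_cast hsum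
  have hterm (i : ι) : ((k : ℤ) + m) * fall ((k : ℤ) + m - 1) (k - j i) =
      (j i + m) * fall (k + m) (k - j i) := by
    rw [mul_fall_sub_one, Nat.cast_sub (hj i)]
    ring
  calc (k + m) * (fall y k - unsignedSum k m j y)
      = ∑ i, ((j i + m) * fall y k -
          (k + m) * fall ((k : ℤ) + m - 1) (k - j i) * fall y (j i)) := by
        simp only [mul_sub, unsignedSum, Finset.sum_sub_distrib, ← Finset.sum_mul, ← hweights,
          Finset.mul_sum, mul_assoc]
    _ = ∑ i, (j i + m) * fall y (j i) * (fall (y - j i) (k - j i) - fall (k + m) (k - j i)) :=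
        Finset.sum_congr rfl fun i _ ↦ by
          rw [hterm, fall_eq_fall_mul_fall y (hj i)]
          ring

theorem unsignedSum_lt_fall (hm : 0 < m) (hk : k ≠ 0) (hj : ∀ i, j i ≤ k)
    (hsum : k + m = ∑ i, (j i + m)) {i₀ : ι} (hi₀ : j i₀ = 0) (hy : (k : ℤ) + m < y)
    (hle : ∀ i, (k : ℤ) + m + j i ≤ y) : unsignedSum k m j y < fall y k := by
  have hnonneg (i : ι) : 0 ≤ ((j i : ℤ) + m) * fall y (j i) *
      (fall (y - j i) (k - j i) - fall (k + m) (k - j i)) :=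
    mul_nonneg (mul_nonneg (by positivity) (fall_nonneg (by lia) _))
      (sub_nonneg.2 (fall_le_fall (by positivity) (by linarith [hle i]) _))
  have hpos : 0 < ((j i₀ : ℤ) + m) * fall y (j i₀) *
      (fall (y - j i₀) (k - j i₀) - fall (k + m) (k - j i₀)) := by
    simp only [hi₀, fall_zero, Nat.cast_zero, zero_add, mul_one, sub_zero, Nat.sub_zero]
    exact mul_pos (by exact_mod_cast hm) (sub_pos.2 (fall_lt_fall hk (by positivity) hy (by lia)))
  have hprod : 0 < (k + m) * (fall y k - unsignedSum k m j y) := by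
    rw [mul_fall_sub_unsignedSum hj hsum]
    exact Finset.sum_pos' (fun i _ ↦ hnonneg i) ⟨i₀, Finset.mem_univ i₀, hpos⟩
  exact sub_pos.1 (pos_of_mul_pos_right hprod (by positivity))

theorem fall_eq_unsignedSum (hm : 0 < m) (hsum : k + m = ∑ i, (j i + m)) (hj : ∀ i, j i = 0) :
    fall (k + m) k = unsignedSum k m j (k + m) := by
  have hprod : ((k : ℤ) + m) * (fall (k + m) k - unsignedSum k m j (k + m)) = 0 := by
    simp [mul_fall_sub_unsignedSum (fun i ↦ (hj i).le.trans k.zero_le) hsum, hj]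
  exact sub_eq_zero.1 ((mul_eq_zero.1 hprod).resolve_left (by positivity))

theorem neg_one_pow_mul_fall_eq_unsignedSum_iff [Nontrivial ι] (hm : 0 < m) (hj : ∀ i, j i < k)
    (hsum : k + m = ∑ i, (j i + m)) (heven : ∀ i, Even (j i)) (hzero : ∃ i, j i = 0)
    (hmy : -(m : ℤ) < y) :
    (-1) ^ k * fall y k = unsignedSum k m j y ↔ Even k ∧ (∀ i, j i = 0) ∧ y = k + m := by
  obtain ⟨i₀, hi₀⟩ := hzero
  have hk : k ≠ 0 := (Nat.zero_lt_of_lt (hj i₀)).ne'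
  constructor
  · intro heq
    have hy : 0 ≤ y := by
      by_contra! hy
      exact (neg_one_pow_mul_fall_lt_unsignedSum_of_neg hk heven hi₀ hmy hy).ne heq
    have hk_even : Even k := by
      by_contra hodd
      exact (neg_one_pow_mul_fall_lt_unsignedSum_of_odd hm (Nat.not_even_iff_odd.1 hodd) heven hi₀
        hy).ne heq
    rw [hk_even.neg_one_pow, one_mul] at heq
    have hle : ∀ i, (k : ℤ) + m + j i ≤ y := by
      by_contra! hlt
      exact (fall_lt_unsignedSum hm (fun i ↦ (hj i).le) heven hi₀ hy hlt).ne heq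
    have hy_le : y ≤ k + m := by
      by_contra! hlt
      exact (unsignedSum_lt_fall hm hk (fun i ↦ (hj i).le) hsum hi₀ hlt hle).ne' heq
    have hj_zero (i : ι) : j i = 0 := by
      have := hle i
      lia
    have hle_y : k + m ≤ y := by simpa [hi₀] using hle i₀
    exact ⟨hk_even, hj_zero, hy_le.antisymm hle_y⟩
  · rintro ⟨hk_even, hj_zero, rfl⟩
    rw [hk_even.neg_one_pow, one_mul, fall_eq_unsignedSum hm hsum hj_zero]

end UnsignedSum

/-- Suppose all `jᵢ` are even and some `jᵢ` is `0`. If it is not the case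
that `k` is even and all `jᵢ = 0`, then the associated polynomial has no positive integer
root; if `k` is even and all `jᵢ = 0`, then `(d+1)m` is its unique positive integer root. -/
theorem all_even_exponents_roots
    (k d m : ℕ) (hk : 0 < k) (hd : 1 < d) (hm : 0 < m)
    (j : Fin d → ℕ) (hj : ∀ i, j i < k)
    (hsum : k + m = ∑ i : Fin d, (j i + m))
    (heven : ∀ i, Even (j i)) (hzero : ∃ i, j i = 0) :
    (¬ (Even k ∧ ∀ i, j i = 0) → ∀ r : ℕ, 0 < r → assocPoly k m d j (r : ℤ) ≠ 0) ∧
      ((Even k ∧ ∀ i, j i = 0) →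
        ∀ r : ℕ, 0 < r → (assocPoly k m d j (r : ℤ) = 0 ↔ r = (d + 1) * m)) := by
  have : Nontrivial (Fin d) := Fin.nontrivial_iff_two_le.2 hd
  have hroot (r : ℕ) (hr : 0 < r) :
      assocPoly k m d j r = 0 ↔ Even k ∧ (∀ i, j i = 0) ∧ (r : ℤ) - m = k + m :=
    (assocPoly_eq_zero_iff (fun i ↦ (hj i).le) heven r).trans
      (neg_one_pow_mul_fall_eq_unsignedSum_iff hm hj hsum heven hzero (by lia))
  refine ⟨fun hnot r hr hr_root ↦ ?_, fun ⟨hk_even, hj_zero⟩ r hr ↦ ?_⟩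
  · obtain ⟨hk_even, hj_zero, -⟩ := (hroot r hr).1 hr_root
    exact hnot ⟨hk_even, hj_zero⟩
  · have hkm : k + m = d * m := by simpa [hj_zero] using hsum
    rw [hroot r hr, add_one_mul, ← hkm]
    simp only [hk_even, hj_zero, implies_true, true_and]
    lia
end
end

section
/- Let l be a positive integer and let c_0, …, c_l be positive integers with gcd(c_0, c_1) = 1. Then there exists a constant C > 0 such that for every nonnegative integer k, the number N_k of (l+1)-tuples of nonnegative integers (a_0, …, a_l) with c_0 a_0 + c_1 a_1 + ⋯ + c_l a_l = k satisfies |N_k − k^l / (l! · c_0 c_1 ⋯ c_l)| ≤ C·(k^{l−1} + 1). -/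
/-!
Adding a part `d` to a list of parts gives the recursion `g (k + d) = f (k + d) + g k` between the
counting functions with and without `d`, so an estimate for `f` sums to one for `g`. Estimates are
kept in the form `k ^ n ≤ D * f (k + t)`, `D * f k ≤ (k + s) ^ n`: Bernoulli's inequality makes this
form stable under the recursion, and it already holds with equality for the single part `1`.

The recursion alone needs the parts without `d` to be coprime. If instead their gcd is `g`, then in
every representation of `k` the multiplicity of `d` has a residue `j` modulo `g` that depends only
on `k`. Removing `j` copies of `d` and bundling the others in groups of `g` identifies these
representations with those of `(k - d * j) / g` in which the parts other than `d` have been divided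
by `g`, hence are coprime.
-/

/-- The number of representations of `k` as a nonnegative integral combination of the parts `c i`.
It is the junk value `0` when there are infinitely many, which requires some `c i = 0`. -/
noncomputable def repCount {ι : Type*} [Fintype ι] (c : ι → ℕ) (k : ℕ) : ℕ :=
  Nat.card {a : ι → ℕ // ∑ i, c i * a i = k}

/-- `f k` is `k ^ n / D` up to bounded shifts of `k`, stated without division or subtraction. This
encodes `f k = k ^ n / D + O(k ^ (n - 1))`, where for `n = 0` the error term is zero. -/
def PowApprox (f : ℕ → ℕ) (n D : ℕ) : Prop :=
  (∃ s, ∀ k, D * f k ≤ (k + s) ^ n) ∧ ∃ t, ∀ k, k ^ n ≤ D * f (k + t)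

theorem add_pow_le_pow_add_mul (x d n : ℕ) :
    (x + d) ^ n ≤ x ^ n + n * (x + d) ^ (n - 1) * d := by
  have bernoulli := pow_add_mul_le_add_pow (a := (x + d : ℤ)) (b := -d) (by positivity) (by lia) n
  rw [add_neg_cancel_right] at bernoulli
  zify
  linarith

theorem pow_le_mul_pow_pred_of_lt {k t : ℕ} (hkt : k < t) (n : ℕ) :
    k ^ n ≤ t * k ^ (n - 1) := by
  cases n with
  | zero => simpa using Nat.succ_le_of_lt (k.zero_le.trans_lt hkt)
  | succ n => exact (pow_succ' k n).trans_le (Nat.mul_le_mul_right _ hkt.le)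

theorem exists_eq_mul_add_mul_of_coprime {g d k : ℕ} (hg : 0 < g) (hgd : g.Coprime d)
    (hk : d * g ≤ k) : ∃ m, ∃ j < g, k = g * m + d * j := by
  obtain ⟨j, hj, hmod⟩ := Nat.exists_mul_mod_eq_of_coprime k hgd.symm hg.ne'
  have hjk : d * j ≤ k := (Nat.mul_le_mul_left d hj.le).trans hk
  obtain ⟨m, hm⟩ := (Nat.modEq_iff_dvd' hjk).1 hmod
  exact ⟨m, j, hj, by lia⟩

section PowApprox

variable {f g : ℕ → ℕ} {n d D : ℕ}

theorem mul_le_add_pow_of_recurrence {s : ℕ} (hf : ∀ k, D * f k ≤ (k + s) ^ n)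
    (hlt : ∀ k < d, g k = f k) (hadd : ∀ k, g (k + d) = f (k + d) + g k) (hd : 0 < d) (k : ℕ) :
    (n + 1) * d * D * g k ≤ (k + (s + d)) ^ (n + 1) := by
  have bernoulli (x : ℕ) : x ^ (n + 1) + (n + 1) * x ^ n * d ≤ (x + d) ^ (n + 1) := by
    simpa using pow_add_mul_le_add_pow (Nat.zero_le x) (Nat.zero_le (2 * x + d)) (n + 1)
  induction k using Nat.strong_induction_on with
  | _ k ih =>
  rcases lt_or_ge k d with hk | hk
  · calc (n + 1) * d * D * g k = (n + 1) * (D * f k) * d := by rw [hlt k hk]; ring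
      _ ≤ (n + 1) * (k + s) ^ n * d := by gcongr; exact hf k
      _ ≤ (k + (s + d)) ^ (n + 1) := by rw [← add_assoc]; exact le_of_add_le_right (bernoulli _)
  · obtain ⟨k, rfl⟩ := Nat.exists_eq_add_of_le' hk
    calc (n + 1) * d * D * g (k + d)
        = (n + 1) * d * D * g k + (n + 1) * (D * f (k + d)) * d := by rw [hadd]; ring
      _ ≤ (k + (s + d)) ^ (n + 1) + (n + 1) * (k + d + s) ^ n * d := by
        gcongr
        · exact ih k (by lia)
        · exact hf _
      _ = (k + d + s) ^ (n + 1) + (n + 1) * (k + d + s) ^ n * d := by rw [add_left_comm, add_comm s]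
      _ ≤ (k + d + (s + d)) ^ (n + 1) := by rw [← add_assoc]; exact bernoulli _

theorem pow_le_mul_of_recurrence {t : ℕ} (hf : ∀ k, k ^ n ≤ D * f (k + t))
    (hfg : ∀ k, f k ≤ g k) (hadd : ∀ k, g (k + d) = f (k + d) + g k) (hd : 0 < d) (k : ℕ) :
    k ^ (n + 1) ≤ (n + 1) * d * D * g (k + t) := by
  induction k using Nat.strong_induction_on with
  | _ k ih =>
  rcases lt_or_ge k d with hk | hk
  · calc k ^ (n + 1) = k * k ^ n := pow_succ' k n
      _ ≤ (n + 1) * d * (D * g (k + t)) := by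
        gcongr
        · exact hk.le.trans (Nat.le_mul_of_pos_left d n.succ_pos)
        · exact (hf k).trans (Nat.mul_le_mul_left D (hfg _))
      _ = (n + 1) * d * D * g (k + t) := (mul_assoc ..).symm
  · obtain ⟨k, rfl⟩ := Nat.exists_eq_add_of_le' hk
    calc (k + d) ^ (n + 1) ≤ k ^ (n + 1) + (n + 1) * (k + d) ^ n * d :=
          add_pow_le_pow_add_mul k d (n + 1)
      _ ≤ (n + 1) * d * D * g (k + t) + (n + 1) * (D * f (k + d + t)) * d := by
        gcongr
        · exact ih k (by lia)
        · exact hf _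
      _ = (n + 1) * d * D * g (k + d + t) := by
        rw [add_right_comm k d t, hadd]; ring

theorem PowApprox.of_recurrence (hf : PowApprox f n D) (hlt : ∀ k < d, g k = f k)
    (hadd : ∀ k, g (k + d) = f (k + d) + g k) (hd : 0 < d) :
    PowApprox g (n + 1) ((n + 1) * d * D) := by
  obtain ⟨⟨s, hs⟩, t, ht⟩ := hf
  have hfg (k : ℕ) : f k ≤ g k := by
    rcases lt_or_ge k d with hk | hk
    · exact (hlt k hk).ge
    · obtain ⟨k, rfl⟩ := Nat.exists_eq_add_of_le' hk
      exact (hadd k).symm ▸ Nat.le_add_right _ _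
  exact ⟨⟨s + d, mul_le_add_pow_of_recurrence hs hlt hadd hd⟩,
    t, pow_le_mul_of_recurrence ht hfg hadd hd⟩

theorem PowApprox.of_dilation {q : ℕ} (hg : PowApprox g n D) (hq : 0 < q) (hqd : q.Coprime d)
    (hfg : ∀ m, ∀ j < q, f (q * m + d * j) = g m)
    (hsupp : ∀ k, f k ≠ 0 → ∃ m, ∃ j < q, k = q * m + d * j) :
    PowApprox f n (q ^ n * D) := by
  obtain ⟨⟨s, hs⟩, t, ht⟩ := hg
  refine ⟨⟨q * s, fun k ↦ ?_⟩, q * t + d * q, fun k ↦ ?_⟩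
  · rcases eq_or_ne (f k) 0 with hk | hk
    · simp only [hk, mul_zero, zero_le]
    · obtain ⟨m, j, hj, rfl⟩ := hsupp k hk
      calc q ^ n * D * f (q * m + d * j) = q ^ n * (D * g m) := by rw [hfg m j hj, mul_assoc]
        _ ≤ q ^ n * (m + s) ^ n := by gcongr; exact hs m
        _ = (q * m + q * s) ^ n := by rw [← mul_pow, mul_add]
        _ ≤ (q * m + d * j + q * s) ^ n := by gcongr; exact Nat.le_add_right _ _
  · obtain ⟨m, j, hj, hkm⟩ : ∃ m, ∃ j < q, k + d * q = q * m + d * j :=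
      exists_eq_mul_add_mul_of_coprime hq hqd (Nat.le_add_left _ _)
    have hkm' : k ≤ q * m := by
      have := Nat.mul_le_mul_left d hj.le
      lia
    have hshift : k + (q * t + d * q) = q * (m + t) + d * j := by rw [mul_add]; lia
    calc k ^ n ≤ (q * m) ^ n := by gcongr
      _ = q ^ n * m ^ n := mul_pow q m n
      _ ≤ q ^ n * (D * g (m + t)) := by gcongr; exact ht m
      _ = q ^ n * D * f (k + (q * t + d * q)) := by rw [hshift, hfg _ j hj, mul_assoc]

theorem PowApprox.exists_abs_mul_sub_pow_le (hf : PowApprox f n D) :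
    ∃ s : ℕ, ∀ k : ℕ, |(D * f k : ℝ) - (k : ℝ) ^ n| ≤ (n + 1) * s * ((k : ℝ) + s) ^ (n - 1) := by
  obtain ⟨⟨s, hs⟩, t, ht⟩ := hf
  have upper (k : ℕ) : D * f k ≤ k ^ n + (n + 1) * (s + t) * (k + (s + t)) ^ (n - 1) :=
    calc D * f k ≤ (k + s) ^ n := hs k
      _ ≤ k ^ n + n * (k + s) ^ (n - 1) * s := add_pow_le_pow_add_mul k s n
      _ = k ^ n + n * s * (k + s) ^ (n - 1) := by ring
      _ ≤ k ^ n + (n + 1) * (s + t) * (k + (s + t)) ^ (n - 1) := by gcongr <;> lia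
  have lower (k : ℕ) : k ^ n ≤ D * f k + (n + 1) * (s + t) * (k + (s + t)) ^ (n - 1) := by
    have hk : k ^ n ≤ D * f k + (n + 1) * t * k ^ (n - 1) := by
      rcases lt_or_ge k t with hkt | hkt
      · calc k ^ n ≤ t * k ^ (n - 1) := pow_le_mul_pow_pred_of_lt hkt n
          _ ≤ (n + 1) * t * k ^ (n - 1) := by gcongr; exact Nat.le_mul_of_pos_left t n.succ_pos
          _ ≤ D * f k + (n + 1) * t * k ^ (n - 1) := Nat.le_add_left _ _
      · obtain ⟨k, rfl⟩ := Nat.exists_eq_add_of_le' hkt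
        calc (k + t) ^ n ≤ k ^ n + n * (k + t) ^ (n - 1) * t := add_pow_le_pow_add_mul k t n
          _ = k ^ n + n * t * (k + t) ^ (n - 1) := by ring
          _ ≤ D * f (k + t) + (n + 1) * t * (k + t) ^ (n - 1) := by
            gcongr
            · exact ht k
            · exact n.le_succ
    refine hk.trans ?_
    gcongr <;> lia
  refine ⟨s + t, fun k ↦ abs_sub_le_iff.2 ⟨?_, ?_⟩⟩
  · exact sub_le_iff_le_add'.2 (mod_cast upper k)
  · exact sub_le_iff_le_add'.2 (mod_cast lower k)

theorem PowApprox.exists_abs_sub_le (hf : PowApprox f n D) (hD : 0 < D) :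
    ∃ C : ℝ, 0 < C ∧ ∀ k : ℕ,
      |(f k : ℝ) - (k : ℝ) ^ n / D| ≤ C * ((k : ℝ) ^ (n - 1) + 1) := by
  obtain ⟨s, hs⟩ := hf.exists_abs_mul_sub_pow_le
  have one_le_D : (1 : ℝ) ≤ D := mod_cast hD
  have add_pow_le_mul (k : ℕ) : ((k : ℝ) + s) ^ (n - 1) ≤
      2 ^ (n - 1 - 1) * (1 + (s : ℝ) ^ (n - 1)) * ((k : ℝ) ^ (n - 1) + 1) :=
    calc ((k : ℝ) + s) ^ (n - 1)
        ≤ 2 ^ (n - 1 - 1) * ((k : ℝ) ^ (n - 1) + (s : ℝ) ^ (n - 1)) :=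
          add_pow_le k.cast_nonneg s.cast_nonneg (n - 1)
      _ ≤ 2 ^ (n - 1 - 1) * ((1 + (s : ℝ) ^ (n - 1)) * ((k : ℝ) ^ (n - 1) + 1)) := by
          gcongr
          have : (0 : ℝ) ≤ s ^ (n - 1) * k ^ (n - 1) := by positivity
          linarith
      _ = 2 ^ (n - 1 - 1) * (1 + (s : ℝ) ^ (n - 1)) * ((k : ℝ) ^ (n - 1) + 1) :=
          (mul_assoc ..).symm
  set M : ℝ := 2 ^ (n - 1 - 1) * (1 + (s : ℝ) ^ (n - 1))
  refine ⟨(n + 1) * s * M + 1, by positivity, fun k ↦ ?_⟩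
  calc |(f k : ℝ) - (k : ℝ) ^ n / D| = |(D * f k : ℝ) - (k : ℝ) ^ n| / D := by
        rw [← Nat.abs_cast D, ← abs_div, Nat.abs_cast, sub_div,
          mul_div_cancel_left₀ _ (by positivity)]
    _ ≤ |(D * f k : ℝ) - (k : ℝ) ^ n| := div_le_self (abs_nonneg _) one_le_D
    _ ≤ (n + 1) * s * ((k : ℝ) + s) ^ (n - 1) := hs k
    _ ≤ (n + 1) * s * (M * ((k : ℝ) ^ (n - 1) + 1)) := by gcongr; exact add_pow_le_mul k
    _ = ((n + 1) * s * M) * ((k : ℝ) ^ (n - 1) + 1) := (mul_assoc ..).symm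
    _ ≤ ((n + 1) * s * M + 1) * ((k : ℝ) ^ (n - 1) + 1) := by gcongr; exact (lt_add_one _).le

end PowApprox

theorem finite_representations {ι : Type*} [Fintype ι] {c : ι → ℕ} (hc : ∀ i, 0 < c i) (k : ℕ) :
    Finite {a : ι → ℕ // ∑ i, c i * a i = k} := by
  classical
  refine ((Set.finite_Iic fun _ ↦ k).subset fun a (ha : ∑ i, c i * a i = k) i ↦ ?_).to_subtype
  calc a i ≤ c i * a i := Nat.le_mul_of_pos_left _ (hc i)
    _ ≤ ∑ i, c i * a i :=
      Finset.single_le_sum_of_canonicallyOrdered (f := fun i ↦ c i * a i) (Finset.mem_univ i)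
    _ = k := ha

section FinCons

variable {n : ℕ} (d : ℕ) (c : Fin n → ℕ)

/-- Separates the multiplicity of the first part in a representation from the other ones. -/
def consRepEquiv (k : ℕ) :
    {a : Fin (n + 1) → ℕ // ∑ i, (Fin.cons d c : Fin (n + 1) → ℕ) i * a i = k} ≃
      {p : ℕ × (Fin n → ℕ) // d * p.1 + ∑ i, c i * p.2 i = k} :=
  ((Fin.consEquiv fun _ ↦ ℕ).subtypeEquiv fun p ↦ by simp [Fin.sum_univ_succ, Fin.consEquiv]).symm

theorem repCount_cons (k : ℕ) :
    repCount (Fin.cons d c : Fin (n + 1) → ℕ) k =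
      Nat.card {p : ℕ × (Fin n → ℕ) // d * p.1 + ∑ i, c i * p.2 i = k} :=
  Nat.card_congr (consRepEquiv d c k)

variable {d c}

theorem repCount_cons_of_lt {k : ℕ} (hk : k < d) :
    repCount (Fin.cons d c : Fin (n + 1) → ℕ) k = repCount c k := by
  rw [repCount_cons]
  have fst_eq_zero (p : ℕ × (Fin n → ℕ)) (hp : d * p.1 + ∑ i, c i * p.2 i = k) : p.1 = 0 := by
    by_contra h
    have := Nat.le_mul_of_pos_right d (Nat.pos_of_ne_zero h)
    lia
  exact Nat.card_congr
    { toFun p := ⟨p.1.2, by simpa [fst_eq_zero p.1 p.2] using p.2⟩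
      invFun a := ⟨(0, a.1), by simpa using a.2⟩
      left_inv p := Subtype.ext (Prod.ext (fst_eq_zero p.1 p.2).symm rfl)
      right_inv _ := rfl }

theorem repCount_cons_add (hd : 0 < d) (hc : ∀ i, 0 < c i) (k : ℕ) :
    repCount (Fin.cons d c : Fin (n + 1) → ℕ) (k + d) =
      repCount c (k + d) + repCount (Fin.cons d c : Fin (n + 1) → ℕ) k := by
  have := finite_representations hc (k + d)
  have := finite_representations (c := (Fin.cons d c : Fin (n + 1) → ℕ)) (Fin.cases hd hc) k
  have := Finite.of_equiv _ (consRepEquiv d c k)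
  rw [repCount_cons, repCount_cons, repCount, ← Nat.card_sum]
  exact Nat.card_congr
    { toFun
        | ⟨(0, a), h⟩ => .inl ⟨a, by simpa using h⟩
        | ⟨(b + 1, a), h⟩ => .inr ⟨(b, a), by lia⟩
      invFun
        | .inl a => ⟨(0, a.1), by simpa using a.2⟩
        | .inr p => ⟨(p.1.1 + 1, p.1.2), by have := p.2; lia⟩
      left_inv := by rintro ⟨⟨_ | b, a⟩, h⟩ <;> rfl
      right_inv := by rintro (a | p) <;> rfl }

theorem repCount_cons_mul {g j : ℕ} (hgd : g.Coprime d) (hj : j < g) (m : ℕ) :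
    repCount (Fin.cons d fun i ↦ g * c i : Fin (n + 1) → ℕ) (g * m + d * j) =
      repCount (Fin.cons d c : Fin (n + 1) → ℕ) m := by
  have hg : 0 < g := j.zero_le.trans_lt hj
  simp only [repCount_cons, mul_assoc, ← Finset.mul_sum]
  have eq_iff (b w : ℕ) : d * (g * b + j) + g * w = g * m + d * j ↔ d * b + w = m := by
    rw [show d * (g * b + j) + g * w = g * (d * b + w) + d * j by ring,
      Nat.add_right_cancel_iff, Nat.mul_right_inj hg.ne']
  have fst_eq (b w : ℕ) (h : d * b + g * w = g * m + d * j) : b = g * (b / g) + j := by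
    have hmod : d * b ≡ d * j [MOD g] := by
      simpa [Nat.ModEq] using congrArg (· % g) h
    rw [← Nat.mod_eq_of_lt hj, ← hmod.cancel_left_of_coprime hgd, Nat.div_add_mod]
  exact Nat.card_congr
    { toFun p := ⟨(p.1.1 / g, p.1.2), (eq_iff _ _).1 (fst_eq _ _ p.2 ▸ p.2)⟩
      invFun p := ⟨(g * p.1.1 + j, p.1.2), (eq_iff _ _).2 p.2⟩
      left_inv p := Subtype.ext (Prod.ext (fst_eq _ _ p.2).symm rfl)
      right_inv _ :=
        Subtype.ext (Prod.ext (by simp [Nat.mul_add_div hg, Nat.div_eq_of_lt hj]) rfl) }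

theorem exists_eq_mul_add_mul_of_repCount_ne_zero {g k : ℕ} (hg : 0 < g)
    (hk : repCount (Fin.cons d fun i ↦ g * c i : Fin (n + 1) → ℕ) k ≠ 0) :
    ∃ m, ∃ j < g, k = g * m + d * j := by
  rw [repCount_cons] at hk
  obtain ⟨⟨b, a⟩, h⟩ := (Nat.card_ne_zero.1 hk).1
  refine ⟨d * (b / g) + ∑ i, c i * a i, b % g, Nat.mod_lt b hg, ?_⟩
  simp only [mul_assoc, ← Finset.mul_sum] at h
  calc k = d * (g * (b / g) + b % g) + g * ∑ i, c i * a i := by rw [Nat.div_add_mod, h]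
    _ = g * (d * (b / g) + ∑ i, c i * a i) + d * (b % g) := by ring

end FinCons

theorem coprime_gcd_of_gcd_cons_eq_one {n d : ℕ} {c : Fin n → ℕ}
    (h : Finset.univ.gcd (Fin.cons d c : Fin (n + 1) → ℕ) = 1) :
    (Finset.univ.gcd c).Coprime d := by
  refine Nat.dvd_one.1 (h ▸ Finset.dvd_gcd fun i _ ↦ ?_)
  refine Fin.cases (Nat.gcd_dvd_right _ _) (fun i ↦ ?_) i
  exact (Nat.gcd_dvd_left _ _).trans (Finset.gcd_dvd (Finset.mem_univ i))

theorem repCount_of_unique {ι : Type*} [Fintype ι] [Unique ι] {c : ι → ℕ} (hc : c default = 1)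
    (k : ℕ) : repCount c k = 1 := by
  simp only [repCount, Fintype.sum_unique, hc, one_mul]
  exact (Nat.card_congr ((Equiv.funUnique ι ℕ).subtypeEquiv fun _ ↦ Iff.rfl)).trans
    (Nat.card_unique (α := {b : ℕ // b = k}))

theorem powApprox_repCount {l : ℕ} {c : Fin (l + 1) → ℕ} (hc : ∀ i, 0 < c i)
    (hgcd : Finset.univ.gcd c = 1) : PowApprox (repCount c) l (l.factorial * ∏ i, c i) := by
  induction l with
  | zero =>
    have hc0 : c 0 = 1 := by simpa using hgcd
    have hone : ∀ k, repCount c k = 1 := repCount_of_unique (ι := Fin 1) hc0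
    exact ⟨⟨0, by simp [hone, hc0]⟩, 0, by simp [hone, hc0]⟩
  | succ l ih =>
    obtain ⟨d, c, rfl⟩ : ∃ d c', c = Fin.cons d c' := ⟨_, _, (Fin.cons_self_tail c).symm⟩
    have hcop := coprime_gcd_of_gcd_cons_eq_one hgcd
    obtain ⟨c', hcc', hgcd'⟩ := Finset.extract_gcd c Finset.univ_nonempty
    generalize Finset.univ.gcd c = g at hcop hcc'
    obtain rfl : c = fun i ↦ g * c' i := funext fun i ↦ hcc' i (Finset.mem_univ i)
    have hd : 0 < d := hc 0
    have hgc (i : Fin (l + 1)) : 0 < g * c' i := hc i.succ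
    have hg : 0 < g := Nat.pos_of_mul_pos_right (hgc 0)
    have hc' (i : Fin (l + 1)) : 0 < c' i := Nat.pos_of_mul_pos_left (hgc i)
    have coprime_case : PowApprox (repCount (Fin.cons d c' : Fin (l + 2) → ℕ)) (l + 1) _ :=
      (ih hc' hgcd').of_recurrence (fun _ ↦ repCount_cons_of_lt) (repCount_cons_add hd hc') hd
    have general_case := coprime_case.of_dilation hg hcop
      (fun m _ hj ↦ repCount_cons_mul hcop hj m)
      (fun _ ↦ exists_eq_mul_add_mul_of_repCount_ne_zero hg)
    convert general_case using 1
    rw [Fin.prod_univ_succ, Nat.factorial_succ]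
    simp only [Fin.cons_zero, Fin.cons_succ, Finset.prod_mul_distrib, Finset.prod_const,
      Finset.card_univ, Fintype.card_fin]
    ring

theorem count_representations_general
    (l : ℕ) (c : Fin (l + 1) → ℕ) (hc : ∀ i, 0 < c i) (hgcd : Finset.univ.gcd c = 1) :
    ∃ C : ℝ, 0 < C ∧ ∀ k : ℕ,
      |(Nat.card {a : Fin (l + 1) → ℕ // ∑ i : Fin (l + 1), c i * a i = k} : ℝ) -
          (k : ℝ) ^ l / ((Nat.factorial l : ℝ) * ∏ i : Fin (l + 1), (c i : ℝ))| ≤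
        C * ((k : ℝ) ^ (l - 1) + 1) := by
  have hD : 0 < l.factorial * ∏ i, c i :=
    mul_pos l.factorial_pos (Finset.prod_pos fun i _ ↦ hc i)
  simpa only [repCount, Nat.cast_mul, Nat.cast_prod] using
    (powApprox_repCount hc hgcd).exists_abs_sub_le hD

/-- For positive integers `c₀, …, c_l` with `gcd(c₀, c₁) = 1`, the number
`N_k` of `(l+1)`-tuples of nonnegative integers `(a₀, …, a_l)` with `∑ cᵢ aᵢ = k` satisfies
`|N_k - kˡ/(l!·c₀⋯c_l)| ≤ C (k^{l-1} + 1)` for some constant `C > 0`. -/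
theorem count_representations
    (l : ℕ) (hl : 0 < l) (c : Fin (l + 1) → ℕ) (hc : ∀ i, 0 < c i)
    (hcop : Nat.gcd (c 0) (c 1) = 1) :
    ∃ C : ℝ, 0 < C ∧ ∀ k : ℕ,
      |(Nat.card {a : Fin (l + 1) → ℕ // ∑ i : Fin (l + 1), c i * a i = k} : ℝ) -
          (k : ℝ) ^ l / ((Nat.factorial l : ℝ) * ∏ i : Fin (l + 1), (c i : ℝ))| ≤
        C * ((k : ℝ) ^ (l - 1) + 1) := by
  have gcd_dvd_gcd : Finset.univ.gcd c ∣ Nat.gcd (c 0) (c 1) :=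
    Nat.dvd_gcd (Finset.gcd_dvd (Finset.mem_univ _)) (Finset.gcd_dvd (Finset.mem_univ _))
  exact count_representations_general l c hc (Nat.dvd_one.1 (gcd_dvd_gcd.trans hcop.dvd))
end

section
/- Let l ≥ 1 and c ≥ 1 be integers. There exists a constant C > 0, depending only on l and c, such that for every integer s ≥ 2 and every integer t, the number of (l+1)-tuples of integers (b_0, …, b_l) satisfying both Σ_{i=0}^{l} b_i s^i = t and |b_i| ≤ c·s for all i = 0, …, l is at most C. -/
/-!
If `b` and `b'` both represent `t` in base `s` and have the same quotients `b i / s = b' i / s`,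
then `b - b'` represents `0` with all digits smaller than `|s|` in absolute value. Reading such a
representation modulo `s`, one digit at a time, shows that all its digits vanish. Hence a
representation is determined by its quotients, each of which lies in `[-c, c]`.
-/

theorem eq_zero_of_sum_mul_pow_eq_zero {n : ℕ} {s : ℤ} {d : Fin n → ℤ} (hd : ∀ i, |d i| < |s|)
    (hsum : ∑ i, d i * s ^ (i : ℕ) = 0) : d = 0 := by
  induction n with
  | zero => exact Subsingleton.elim d 0
  | succ n ih =>
    have hs : s ≠ 0 := abs_pos.mp ((abs_nonneg _).trans_lt (hd 0))
    have hsplit : d 0 + s * ∑ i, Fin.tail d i * s ^ (i : ℕ) = 0 := by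
      simpa [Fin.sum_univ_succ, Fin.tail, Finset.mul_sum, pow_succ', mul_left_comm] using hsum
    have hdvd : s ∣ d 0 := (dvd_add_left (dvd_mul_right s _)).mp (hsplit ▸ dvd_zero s)
    have hhead : d 0 = 0 := Int.eq_zero_of_abs_lt_dvd ((abs_dvd s _).mpr hdvd) (hd 0)
    have htail : Fin.tail d = 0 :=
      ih (fun i => hd i.succ) (by simpa [hhead, hs] using hsplit)
    exact funext (Fin.cases hhead (congrFun htail))

theorem abs_sub_lt_of_ediv_eq_ediv {a b m : ℤ} (hm : m ≠ 0) (h : a / m = b / m) :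
    |a - b| < |m| := by
  have hsub : a - b = a % m - b % m := by rw [Int.emod_def, Int.emod_def, h]; ring
  rw [hsub]
  exact abs_sub_lt_of_nonneg_of_lt (Int.emod_nonneg a hm) (Int.emod_lt_abs a hm)
    (Int.emod_nonneg b hm) (Int.emod_lt_abs b hm)

theorem abs_ediv_le_of_abs_le_mul {a k m : ℤ} (hm : m ≠ 0) (h : |a| ≤ k * |m|) : |a / m| ≤ k := by
  wlog hpos : 0 < m generalizing m
  · simpa using this (neg_ne_zero.mpr hm) (by simpa using h) (by lia)
  rw [abs_of_pos hpos, abs_le, ← neg_mul] at h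
  exact abs_le.mpr
    ⟨(Int.le_ediv_iff_mul_le hpos).mpr h.1, Int.ediv_le_of_le_mul hpos h.2⟩

theorem injOn_ediv_setOf_sum_mul_pow_eq (n : ℕ) {s : ℤ} (hs : s ≠ 0) (t : ℤ) :
    Set.InjOn (fun (b : Fin n → ℤ) i => b i / s) {b | ∑ i, b i * s ^ (i : ℕ) = t} := by
  intro b hb b' hb' hquot
  have hdigit : ∀ i, |(b - b') i| < |s| := fun i =>
    abs_sub_lt_of_ediv_eq_ediv hs (congrFun hquot i)
  have hsum : ∑ i, (b - b') i * s ^ (i : ℕ) = 0 := by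
    simp only [Pi.sub_apply, sub_mul, Finset.sum_sub_distrib]
    exact sub_eq_zero.mpr (hb.trans hb'.symm)
  exact sub_eq_zero.mp (eq_zero_of_sum_mul_pow_eq_zero hdigit hsum)

theorem count_bounded_digit_representations_general (n c : ℕ) {s : ℤ} (hs : s ≠ 0) (t : ℤ) :
    {b : Fin n → ℤ | ∑ i, b i * s ^ (i : ℕ) = t ∧ ∀ i, |b i| ≤ c * |s|}.encard
      ≤ ((2 * c + 1) ^ n : ℕ) := by
  let quotients : Finset (Fin n → ℤ) := Fintype.piFinset fun _ => Finset.Icc (-(c : ℤ)) c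
  have hcard : quotients.card = (2 * c + 1) ^ n := by
    rw [Fintype.card_piFinset_const, Int.card_Icc]
    congr 1
    lia
  rw [← hcard, ← Set.encard_coe_eq_coe_finsetCard]
  refine Set.encard_le_encard_of_injOn (fun _ hb => ?_)
    ((injOn_ediv_setOf_sum_mul_pow_eq n hs t).mono fun _ hb => hb.1)
  exact Fintype.mem_piFinset.mpr fun i =>
    Finset.mem_Icc.mpr (abs_le.mp (abs_ediv_le_of_abs_le_mul hs (hb.2 i)))

/-- For integers `l ≥ 1` and `c ≥ 1` there is a constant `C`, depending
only on `l` and `c`, bounding the number of `(l+1)`-tuples of integers `(b₀, …, b_l)` with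
`∑ bᵢ sⁱ = t` and `|bᵢ| ≤ c·s`, uniformly over integers `s ≥ 2` and `t`. -/
theorem count_bounded_digit_representations
    (l c : ℕ) (hl : 1 ≤ l) (hc : 1 ≤ c) :
    ∃ C : ℕ, 0 < C ∧ ∀ s : ℤ, 2 ≤ s → ∀ t : ℤ,
      Nat.card {b : Fin (l + 1) → ℤ //
        (∑ i : Fin (l + 1), b i * s ^ (i : ℕ)) = t ∧ ∀ i, |b i| ≤ (c : ℤ) * s} ≤ C := by
  refine ⟨(2 * c + 1) ^ (l + 1), by positivity, fun s hs t => ENat.toNat_le_of_le_natCast ?_⟩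
  have hbound := count_bounded_digit_representations_general (l + 1) c (s := s) (by lia) t
  rwa [abs_of_pos (show 0 < s by lia)] at hbound
end
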